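/- arXiv:2108.11074 — 2 statements merged into one kernel-verified Lean document; each statement's English description precedes it below -/
import Mathlib

section
/- Under Assumptions 1–2, √(n−k)·D(P̂^{(n)} ‖ P̄) → 0 almost surely as n → ∞, where D denotes the Kullback–Leibler divergence between the empirical (k+1)-block distribution and the stationary (k+1)-block distribution; the same holds with P̂^{(n)} and P̄ replaced by any pair of corresponding marginal distributions. -/
open MeasureTheory Filter Finset
open scoped BigOperators Topology ENNReal NNReal Classical

namespace DIG

/-- Extended-real logarithm: `⊥` on nonpositive reals, so that the log-likelihood of an
impossible observation is `-∞`. -/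
noncomputable def elog (x : ℝ) : EReal := if x ≤ 0 then (⊥ : EReal) else ((Real.log x : ℝ) : EReal)

/-- A block of length `L` over the alphabet `𝒳`. -/
abbrev Blk (𝒳 : Type*) (L : ℕ) : Type _ := Fin L → 𝒳

/-- A joint history of the three processes: three `k`-blocks. -/
abbrev Hist (𝒳 : Type*) (k : ℕ) : Type _ := Blk 𝒳 k × Blk 𝒳 k × Blk 𝒳 k

/-- A joint symbol of the three processes. -/
abbrev Sym (𝒳 : Type*) : Type _ := 𝒳 × 𝒳 × 𝒳

variable {𝒳 : Type*} [Fintype 𝒳] [DecidableEq 𝒳] [Nonempty 𝒳]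
variable {Ω : Type*} [MeasurableSpace Ω]

/-- The real-valued measure of a set. -/
noncomputable def mreal (μ : MeasureTheory.Measure Ω) (s : Set Ω) : ℝ := (μ s).toReal

/-- Kullback-Leibler divergence between two pmfs on a finite set (with the usual
`0 log 0 = 0` convention, automatic since `0 * x = 0`). -/
noncomputable def KLfin {S : Type*} [Fintype S] (p q : S → ℝ) : ℝ :=
  ∑ s, p s * Real.log (p s / q s)

/-- Shannon entropy of a pmf on a finite set. -/
noncomputable def Hent {S : Type*} [Fintype S] (p : S → ℝ) : ℝ :=
  -∑ s, p s * Real.log (p s)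

/-- Pushforward (marginal) of a pmf along a map of finite sets. -/
noncomputable def pushf {S T : Type*} [Fintype S] [DecidableEq T] (g : S → T) (p : S → ℝ) :
    T → ℝ := fun t => ∑ s, if g s = t then p s else 0

/-! ### Marginals of a joint distribution of `(k+1)`-blocks of three processes -/

/-- Marginal of `(Y₁ᵏ, Z₁ᵏ⁺¹)`. -/
noncomputable def margYkZ {k : ℕ} (p : Blk 𝒳 (k+1) → Blk 𝒳 (k+1) → Blk 𝒳 (k+1) → ℝ)
    (β : Blk 𝒳 k) (c : Blk 𝒳 (k+1)) : ℝ :=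
  ∑ a : Blk 𝒳 (k+1), ∑ yl : 𝒳, p a (Fin.snoc β yl) c

/-- Marginal of `(Y₁ᵏ⁺¹, Z₁ᵏ⁺¹)`. -/
noncomputable def margYZ {k : ℕ} (p : Blk 𝒳 (k+1) → Blk 𝒳 (k+1) → Blk 𝒳 (k+1) → ℝ)
    (b c : Blk 𝒳 (k+1)) : ℝ :=
  ∑ a : Blk 𝒳 (k+1), p a b c

/-- Marginal of `(X₁ᵏ⁺¹, Y₁ᵏ, Z₁ᵏ⁺¹)`. -/
noncomputable def margXYkZ {k : ℕ} (p : Blk 𝒳 (k+1) → Blk 𝒳 (k+1) → Blk 𝒳 (k+1) → ℝ)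
    (a : Blk 𝒳 (k+1)) (β : Blk 𝒳 k) (c : Blk 𝒳 (k+1)) : ℝ :=
  ∑ yl : 𝒳, p a (Fin.snoc β yl) c

/-- Marginal of `(X₁ᵏ, Y₁ᵏ, Z₁ᵏ)` (the first `k` coordinates of each block). -/
noncomputable def margK {k : ℕ} (p : Blk 𝒳 (k+1) → Blk 𝒳 (k+1) → Blk 𝒳 (k+1) → ℝ)
    (α β γ : Blk 𝒳 k) : ℝ :=
  ∑ xl : 𝒳, ∑ yl : 𝒳, ∑ zl : 𝒳, p (Fin.snoc α xl) (Fin.snoc β yl) (Fin.snoc γ zl)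

/-- Conditional mutual information `I(Y_{k+1}; X₁ᵏ⁺¹ | Y₁ᵏ, Z₁ᵏ⁺¹)` computed under the joint
pmf `p` of the three `(k+1)`-blocks. -/
noncomputable def condMI {k : ℕ} (p : Blk 𝒳 (k+1) → Blk 𝒳 (k+1) → Blk 𝒳 (k+1) → ℝ) : ℝ :=
  ∑ a : Blk 𝒳 (k+1), ∑ b : Blk 𝒳 (k+1), ∑ c : Blk 𝒳 (k+1),
    p a b c * Real.log ((p a b c * margYkZ p (Fin.init b) c) /
      (margYZ p b c * margXYkZ p a (Fin.init b) c))

/-! ### Transition matrices and factorization (absence of the edge `X → Y`) -/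

/-- `Q` is a transition probability matrix for the joint `k`-th order Markov process. -/
def IsTransMat {k : ℕ} (Q : Hist 𝒳 k → Sym 𝒳 → ℝ) : Prop :=
  (∀ h s, 0 ≤ Q h s) ∧ (∀ h, ∑ s : Sym 𝒳, Q h s = 1)

/-- The factorization of the transition matrix expressing the absence of the edge `X → Y`:
`Q(x',y',z' | hx,hy,hz) = Q1(x',z' | hx,hy,hz) · Q2(y' | hy, (hz,z'))`. -/
def IsFactorized {k : ℕ} (Q : Hist 𝒳 k → Sym 𝒳 → ℝ) : Prop :=
  ∃ (Q1 : Hist 𝒳 k → 𝒳 × 𝒳 → ℝ) (Q2 : Blk 𝒳 k × Blk 𝒳 (k+1) → 𝒳 → ℝ),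
    (∀ h p, 0 ≤ Q1 h p) ∧ (∀ h, ∑ p : 𝒳 × 𝒳, Q1 h p = 1) ∧
    (∀ h y, 0 ≤ Q2 h y) ∧ (∀ h, ∑ y : 𝒳, Q2 h y = 1) ∧
    (∀ (hx hy hz : Blk 𝒳 k) (x' y' z' : 𝒳),
      Q (hx, hy, hz) (x', y', z') = Q1 (hx, hy, hz) (x', z') * Q2 (hy, Fin.snoc hz z') y')

/-! ### The process, stationarity, Markov property, Assumption 3 -/

/-- The event that the length-`L` blocks of the three processes starting at time `t`
equal `(a, b, c)`. -/
def blockEvent (X Y Z : ℕ → Ω → 𝒳) (t L : ℕ) (a b c : Blk 𝒳 L) : Set Ω :=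
  {ω | ∀ i : Fin L, X (t + i) ω = a i ∧ Y (t + i) ω = b i ∧ Z (t + i) ω = c i}

/-- Joint stationarity of the three processes. -/
def Stationary (μ : MeasureTheory.Measure Ω) (X Y Z : ℕ → Ω → 𝒳) : Prop :=
  ∀ (t L : ℕ) (a b c : Blk 𝒳 L),
    μ (blockEvent X Y Z t L a b c) = μ (blockEvent X Y Z 0 L a b c)

/-- The joint process is Markov of order `k` with transition matrix `Q`: conditionally on the
entire past, the next joint symbol is distributed according to `Q` applied to the last
`k`-block of the past. -/
def MarkovOfOrder (μ : MeasureTheory.Measure Ω) (X Y Z : ℕ → Ω → 𝒳) (k : ℕ)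
    (Q : Hist 𝒳 k → Sym 𝒳 → ℝ) : Prop :=
  ∀ (j : ℕ) (pa pb pc : Blk 𝒳 j) (a b c : Blk 𝒳 k) (s : Sym 𝒳),
    mreal μ (blockEvent X Y Z 0 j pa pb pc ∩ blockEvent X Y Z j k a b c ∩
        {ω | X (j + k) ω = s.1 ∧ Y (j + k) ω = s.2.1 ∧ Z (j + k) ω = s.2.2})
      = Q (a, b, c) s *
        mreal μ (blockEvent X Y Z 0 j pa pb pc ∩ blockEvent X Y Z j k a b c)

/-- Assumption 3: `Y_{k+1}` is conditionally independent of the past `(Y₋∞⁰, Z₋∞⁰)` given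
`(Y₁ᵏ, Z₁ᵏ⁺¹)` (stated at every time shift `j`, which by stationarity is the one-sided
form of the two-sided statement). -/
def CondIndepPast (μ : MeasureTheory.Measure Ω) (X Y Z : ℕ → Ω → 𝒳) (k : ℕ) : Prop :=
  ∀ (j : ℕ) (py pz : Blk 𝒳 j) (b : Blk 𝒳 k) (c : Blk 𝒳 (k+1)) (y : 𝒳),
    mreal μ ({ω | Y (j + k) ω = y} ∩
        {ω | (∀ i : Fin k, Y (j + i) ω = b i) ∧ (∀ i : Fin (k+1), Z (j + i) ω = c i)} ∩
        {ω | ∀ i : Fin j, Y i ω = py i ∧ Z i ω = pz i}) *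
      mreal μ {ω | (∀ i : Fin k, Y (j + i) ω = b i) ∧ (∀ i : Fin (k+1), Z (j + i) ω = c i)}
    = mreal μ ({ω | Y (j + k) ω = y} ∩
        {ω | (∀ i : Fin k, Y (j + i) ω = b i) ∧ (∀ i : Fin (k+1), Z (j + i) ω = c i)}) *
      mreal μ ({ω | (∀ i : Fin k, Y (j + i) ω = b i) ∧ (∀ i : Fin (k+1), Z (j + i) ω = c i)} ∩
        {ω | ∀ i : Fin j, Y i ω = py i ∧ Z i ω = pz i})

/-- Measurability of the elementary events of the process. -/
def MeasProc (X Y Z : ℕ → Ω → 𝒳) : Prop :=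
  ∀ (i : ℕ) (x : 𝒳), MeasurableSet {ω | X i ω = x} ∧ MeasurableSet {ω | Y i ω = x} ∧
    MeasurableSet {ω | Z i ω = x}

/-! ### Empirical distribution, plug-in directed information, log-likelihoods -/

/-- Empirical distribution of `(k+1)`-blocks of three sample sequences of length `n`. -/
noncomputable def empDistSeq (x y z : ℕ → 𝒳) (k n : ℕ) (a b c : Blk 𝒳 (k+1)) : ℝ :=
  ((n - k : ℕ) : ℝ)⁻¹ * ∑ t ∈ Finset.range (n - k),
    if ∀ i : Fin (k+1), x (t + i) = a i ∧ y (t + i) = b i ∧ z (t + i) = c i then 1 else 0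

/-- Empirical distribution of `(k+1)`-blocks of the three processes (random). -/
noncomputable def empDist (X Y Z : ℕ → Ω → 𝒳) (k n : ℕ) (a b c : Blk 𝒳 (k+1)) (ω : Ω) : ℝ :=
  empDistSeq (fun i => X i ω) (fun i => Y i ω) (fun i => Z i ω) k n a b c

/-- The stationary `(k+1)`-block distribution `P̄`. -/
noncomputable def statDist (μ : MeasureTheory.Measure Ω) (X Y Z : ℕ → Ω → 𝒳) (k : ℕ)
    (a b c : Blk 𝒳 (k+1)) : ℝ :=
  mreal μ (blockEvent X Y Z 0 (k+1) a b c)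

/-- Plug-in estimator of the directed information:
`Î_n^{(k)}(X→Y‖Z) = I(Ŷ_{k+1}; X̂₁ᵏ⁺¹ | Ŷ₁ᵏ, Ẑ₁ᵏ⁺¹)` under the empirical distribution. -/
noncomputable def empMI (X Y Z : ℕ → Ω → 𝒳) (k n : ℕ) (ω : Ω) : ℝ :=
  condMI (fun a b c => empDist X Y Z k n a b c ω)

/-- Log-likelihood (extended-real valued) of the samples under transition matrix `Q`. -/
noncomputable def loglikSeq {k : ℕ} (Q : Hist 𝒳 k → Sym 𝒳 → ℝ) (x y z : ℕ → 𝒳) (n : ℕ) :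
    EReal :=
  ∑ i ∈ Finset.Ico k n,
    elog (Q (fun j : Fin k => x (i - k + j), fun j : Fin k => y (i - k + j),
      fun j : Fin k => z (i - k + j)) (x i, y i, z i))

/-- Log-likelihood of the process samples under transition matrix `Q`. -/
noncomputable def loglik {k : ℕ} (Q : Hist 𝒳 k → Sym 𝒳 → ℝ) (X Y Z : ℕ → Ω → 𝒳) (n : ℕ)
    (ω : Ω) : EReal :=
  loglikSeq Q (fun i => X i ω) (fun i => Y i ω) (fun i => Z i ω) n

/-- The Neyman–Pearson log-likelihood ratio `Λ_{xy,n}`: the maximal log-likelihood over all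
transition matrices minus the maximal log-likelihood over the factorized (null-hypothesis)
transition matrices. -/
noncomputable def Lambda (X Y Z : ℕ → Ω → 𝒳) (k n : ℕ) (ω : Ω) : EReal :=
  sSup {L : EReal | ∃ Q : Hist 𝒳 k → Sym 𝒳 → ℝ, IsTransMat Q ∧ L = loglik Q X Y Z n ω} -
  sSup {L : EReal | ∃ Q : Hist 𝒳 k → Sym 𝒳 → ℝ, IsTransMat Q ∧ IsFactorized Q ∧
    L = loglik Q X Y Z n ω}

/-! ### Chi-squared distribution and convergence in distribution -/

/-- The chi-squared distribution with `f` degrees of freedom: the Gamma distribution with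
shape `f/2` and rate `1/2`. -/
noncomputable def chiSq (f : ℝ) : MeasureTheory.Measure ℝ :=
  ProbabilityTheory.gammaMeasure (f / 2) (1 / 2)

/-- `W n` converges in distribution (weakly) to `ν` as `n → ∞`. -/
def TendstoInDist (μ : MeasureTheory.Measure Ω) (W : ℕ → Ω → ℝ)
    (ν : MeasureTheory.Measure ℝ) : Prop :=
  ∀ f : BoundedContinuousFunction ℝ ℝ,
    Tendsto (fun n => ∫ ω, f (W n ω) ∂μ) atTop (𝓝 (∫ x, f x ∂ν))

/-- Conditional mutual information `I(U; V | W)` of finitely-valued random variables. -/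
noncomputable def cmiRV {A B C : Type*} [Fintype A] [Fintype B] [Fintype C]
    [DecidableEq A] [DecidableEq B] [DecidableEq C]
    (μ : MeasureTheory.Measure Ω) (U : Ω → A) (V : Ω → B) (W : Ω → C) : ℝ :=
  ∑ a : A, ∑ b : B, ∑ c : C,
    mreal μ {ω | U ω = a ∧ V ω = b ∧ W ω = c} *
      Real.log ((mreal μ {ω | U ω = a ∧ V ω = b ∧ W ω = c} * mreal μ {ω | W ω = c}) /
        (mreal μ {ω | U ω = a ∧ W ω = c} * mreal μ {ω | V ω = b ∧ W ω = c}))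

end DIG
namespace DIG
section helpers
variable {𝒳 : Type*} {Ω : Type*}

/-- The joint symbol at time `i`. -/
def sy (x y z : ℕ → 𝒳) (i : ℕ) : Sym 𝒳 := (x i, y i, z i)

/-- The joint window of length `k` at time `t`. -/
def win (k : ℕ) (x y z : ℕ → 𝒳) (t : ℕ) : Hist 𝒳 k :=
  (fun i => x (t + i), fun i => y (t + i), fun i => z (t + i))

/-- Appending a symbol. -/
def extd {k : ℕ} (w : Hist 𝒳 k) (s : Sym 𝒳) : Hist 𝒳 (k+1) :=
  (Fin.snoc (α := fun _ => 𝒳) w.1 s.1, Fin.snoc (α := fun _ => 𝒳) w.2.1 s.2.1,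
    Fin.snoc (α := fun _ => 𝒳) w.2.2 s.2.2)

/-- Dropping the first symbol. -/
def drp {k : ℕ} (w : Hist 𝒳 (k+1)) : Hist 𝒳 k :=
  (Fin.tail w.1, Fin.tail w.2.1, Fin.tail w.2.2)

lemma snoc_win (k : ℕ) (x : ℕ → 𝒳) (t : ℕ) :
    Fin.snoc (α := fun _ => 𝒳) (fun i : Fin k => x (t + i)) (x (t + k)) =
      fun i : Fin (k+1) => x (t + i) := by
  funext i
  refine Fin.lastCases ?_ (fun j => ?_) i
  · simp
  · simp

lemma extd_win (k : ℕ) (x y z : ℕ → 𝒳) (t : ℕ) :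
    extd (win k x y z t) (sy x y z (t + k)) = win (k+1) x y z t := by
  simp only [extd, win, sy, snoc_win]

lemma drp_win (k : ℕ) (x y z : ℕ → 𝒳) (t : ℕ) :
    drp (win (k+1) x y z t) = win k x y z (t+1) := by
  simp only [drp, win, Prod.mk.injEq]
  refine ⟨?_, ?_, ?_⟩ <;>
  · funext i
    simp only [Fin.tail, Fin.val_succ]
    congr 1
    omega

lemma drp_extd_win (k : ℕ) (x y z : ℕ → 𝒳) (t : ℕ) :
    drp (extd (win k x y z t) (sy x y z (t + k))) = win k x y z (t+1) := by
  rw [extd_win, drp_win]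

lemma win_eq_iff (k : ℕ) (x y z : ℕ → 𝒳) (t : ℕ) (a b c : Blk 𝒳 k) :
    win k x y z t = (a, b, c) ↔
      ∀ i : Fin k, x (t + i) = a i ∧ y (t + i) = b i ∧ z (t + i) = c i := by
  simp only [win, Prod.mk.injEq, funext_iff]
  exact ⟨fun h i => ⟨h.1 i, h.2.1 i, h.2.2 i⟩, fun h => ⟨fun i => (h i).1, fun i => (h i).2.1,
    fun i => (h i).2.2⟩⟩

/-- Harmonic functions are constant. -/
lemma harmonic_const [Fintype 𝒳] [Nonempty 𝒳] {k : ℕ} (Q : Hist 𝒳 k → Sym 𝒳 → ℝ)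
    (hQ : IsTransMat Q) (hQpos : ∀ h s, 0 < Q h s) (h : Hist 𝒳 k → ℝ)
    (hh : ∀ w, h w = ∑ s, Q w s * h (drp (extd w s))) : ∃ M, ∀ w, h w = M := by
  obtain ⟨w0, hw0⟩ := Finite.exists_max h
  refine ⟨h w0, fun w => ?_⟩
  have step : ∀ v, h v = h w0 → ∀ s, h (drp (extd v s)) = h w0 := by
    intro v hv s
    have h1 : ∑ s, Q v s * (h w0 - h (drp (extd v s))) = 0 := by
      simp only [mul_sub, Finset.sum_sub_distrib, ← Finset.sum_mul, hQ.2 v]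
      rw [← hh v, hv]; ring
    have h2 := (Finset.sum_eq_zero_iff_of_nonneg (fun s _ =>
      mul_nonneg (hQ.1 v s) (sub_nonneg.2 (hw0 _)))).1 h1 s (Finset.mem_univ _)
    rcases mul_eq_zero.1 h2 with h3 | h3
    · exact absurd h3 (hQpos v s).ne'
    · linarith
  let d : 𝒳 := Classical.arbitrary 𝒳
  let mk : Blk 𝒳 k → Blk 𝒳 k → ℕ → 𝒳 := fun a b i =>
    if h : i < k then a ⟨i, h⟩ else if h : i - k < k then b ⟨i - k, h⟩ else d
  have mk0 : ∀ a b, (fun i : Fin k => mk a b (0 + i)) = a := by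
    intro a b; funext i; simp [mk]
  have mk1 : ∀ a b, (fun i : Fin k => mk a b (k + i)) = b := by
    intro a b; funext i; simp [mk]
  let x := mk w0.1 w.1
  let y := mk w0.2.1 w.2.1
  let z := mk w0.2.2 w.2.2
  have key : ∀ t, h (win k x y z t) = h w0 := by
    intro t
    induction t with
    | zero => simp only [win, x, y, z, mk0]
    | succ t ih => rw [← drp_extd_win]; exact step _ ih _
  have := key k
  simpa only [win, x, y, z, mk1] using this

/-- Solvability of the Poisson equation. -/
lemma poisson [Fintype 𝒳] [Nonempty 𝒳] {k : ℕ} (Q : Hist 𝒳 k → Sym 𝒳 → ℝ)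
    (hQ : IsTransMat Q) (hQpos : ∀ h s, 0 < Q h s) (p : Hist 𝒳 k → ℝ)
    (hp1 : ∑ w, p w = 1)
    (hinv : ∀ h : Hist 𝒳 k → ℝ, ∑ w, p w * ∑ s, Q w s * h (drp (extd w s)) = ∑ w, p w * h w)
    (F : Hist 𝒳 k → ℝ) :
    ∃ h : Hist 𝒳 k → ℝ, ∀ w, h w - ∑ s, Q w s * h (drp (extd w s)) = F w - ∑ v, p v * F v := by
  let B : (Hist 𝒳 k → ℝ) →ₗ[ℝ] (Hist 𝒳 k → ℝ) :=
    { toFun := fun h w => h w - ∑ s, Q w s * h (drp (extd w s)) + ∑ v, p v * h v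
      map_add' := by
        intro f g; funext w
        simp only [Pi.add_apply, mul_add, Finset.sum_add_distrib]; ring
      map_smul' := by
        intro c f; funext w
        simp only [Pi.smul_apply, smul_eq_mul, RingHom.id_apply, mul_add, mul_sub, Finset.mul_sum]
        congr 1
        · congr 1
          exact Finset.sum_congr rfl fun _ _ => by ring
        · exact Finset.sum_congr rfl fun _ _ => by ring }
  have hB : ∀ h w, B h w = h w - ∑ s, Q w s * h (drp (extd w s)) + ∑ v, p v * h v :=
    fun _ _ => rfl
  have hpB : ∀ h, ∑ w, p w * B h w = ∑ v, p v * h v := by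
    intro h
    simp only [hB, mul_add, mul_sub, Finset.sum_add_distrib, Finset.sum_sub_distrib, hinv,
      ← Finset.sum_mul, hp1]
    ring
  have inj : Function.Injective B := by
    rw [← LinearMap.ker_eq_bot, LinearMap.ker_eq_bot']
    intro h h0
    have e1 : ∑ v, p v * h v = 0 := by rw [← hpB, h0]; simp
    have e2 : ∀ w, h w = ∑ s, Q w s * h (drp (extd w s)) := by
      intro w
      have := congrFun h0 w
      rw [hB, e1] at this
      simp only [Pi.zero_apply] at this
      linarith
    obtain ⟨M, hM⟩ := harmonic_const Q hQ hQpos h e2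
    simp only [hM, ← Finset.sum_mul, hp1, one_mul] at e1
    funext w; simp [hM, e1]
  obtain ⟨h, hh⟩ := (LinearMap.injective_iff_surjective.1 inj) (fun w => F w - ∑ v, p v * F v)
  refine ⟨h, fun w => ?_⟩
  have e1 : ∑ v, p v * h v = 0 := by
    rw [← hpB, hh]
    simp only [mul_sub, Finset.sum_sub_distrib, ← Finset.sum_mul, hp1]
    ring
  have := congrFun hh w
  rw [hB, e1] at this
  linarith

lemma exp_le_add_exp_sq (x : ℝ) : Real.exp x ≤ x + Real.exp (x ^ 2) := by
  have h2 := Real.add_one_le_exp (x ^ 2)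
  by_cases hx : |x| ≤ 1
  · have h1 := (abs_le.1 (Real.abs_exp_sub_one_sub_id_le hx)).2
    linarith
  · rcases lt_abs.1 (not_le.1 hx) with h | h
    · have : Real.exp x ≤ Real.exp (x ^ 2) := Real.exp_le_exp.2 (by nlinarith)
      linarith
    · have : Real.exp x ≤ 1 := Real.exp_le_one_iff.2 (by linarith)
      nlinarith

/-- Expectation of a function of a finitely valued variable. -/
lemma integral_fin [MeasurableSpace Ω] (μ : Measure Ω) [IsProbabilityMeasure μ]
    {A : Type*} [Fintype A] (U : Ω → A) (hU : ∀ a, MeasurableSet {ω | U ω = a}) (Ψ : A → ℝ) :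
    Integrable (fun ω => Ψ (U ω)) μ ∧
      ∫ ω, Ψ (U ω) ∂μ = ∑ a, Ψ a * mreal μ {ω | U ω = a} := by
  have e : (fun ω => Ψ (U ω)) =
      fun ω => ∑ a, Set.indicator {ω | U ω = a} (fun _ => Ψ a) ω := by
    funext ω
    simp [Set.indicator_apply]
  have hi : ∀ a ∈ Finset.univ, Integrable (Set.indicator {ω | U ω = a} (fun _ => Ψ a)) μ :=
    fun a _ => (integrable_const _).indicator (hU a)
  rw [e]
  refine ⟨integrable_finsetSum _ hi, ?_⟩
  rw [integral_finsetSum _ hi]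
  refine Finset.sum_congr rfl fun a _ => ?_
  rw [integral_indicator_const _ (hU a), mreal, Measure.real, smul_eq_mul, mul_comm]

/-- one-term KL bounds -/
lemma kl_term (p q : ℝ) (hp : 0 ≤ p) (hq : 0 ≤ q) (h0 : q = 0 → p = 0) :
    p - q ≤ p * Real.log (p / q) ∧ p * Real.log (p / q) ≤ (p - q) + (p - q) ^ 2 / q := by
  rcases hq.eq_or_lt with h | h
  · have := h0 h.symm
    simp [this, ← h]
  rcases hp.eq_or_lt with hp' | hp'
  · simp only [← hp']
    constructor
    · simp; exact hq
    · simp; field_simp; simp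
  have hr : 0 < p / q := by positivity
  constructor
  · have := Real.one_sub_inv_le_log_of_pos hr
    have h3 := mul_le_mul_of_nonneg_left this hp
    have : p * (1 - (p / q)⁻¹) = p - q := by field_simp
    linarith
  · have := Real.log_le_sub_one_of_pos hr
    have h3 := mul_le_mul_of_nonneg_left this hp
    have : p * (p / q - 1) = (p - q) + (p - q) ^ 2 / q := by field_simp; ring
    linarith

end helpers
end DIG
namespace DIG
section helpers2
variable {𝒳 : Type*} {Ω : Type*} [MeasurableSpace Ω]

/-- Window of the process. -/
abbrev W (X Y Z : ℕ → Ω → 𝒳) (k t : ℕ) (ω : Ω) : Hist 𝒳 k :=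
  win k (fun i => X i ω) (fun i => Y i ω) (fun i => Z i ω) t

/-- Symbol of the process. -/
abbrev Sy (X Y Z : ℕ → Ω → 𝒳) (t : ℕ) (ω : Ω) : Sym 𝒳 :=
  sy (fun i => X i ω) (fun i => Y i ω) (fun i => Z i ω) t

lemma setOf_W (X Y Z : ℕ → Ω → 𝒳) (k t : ℕ) (w : Hist 𝒳 k) :
    {ω | W X Y Z k t ω = w} = blockEvent X Y Z t k w.1 w.2.1 w.2.2 := by
  ext ω
  exact win_eq_iff k _ _ _ t w.1 w.2.1 w.2.2

lemma setOf_Sy (X Y Z : ℕ → Ω → 𝒳) (t : ℕ) (s : Sym 𝒳) :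
    {ω | Sy X Y Z t ω = s} = {ω | X t ω = s.1 ∧ Y t ω = s.2.1 ∧ Z t ω = s.2.2} := by
  ext ω
  simp [Sy, sy, Prod.ext_iff]

lemma meas_Sy {X Y Z : ℕ → Ω → 𝒳} (hmeas : MeasProc X Y Z) (t : ℕ) (s : Sym 𝒳) :
    MeasurableSet {ω | Sy X Y Z t ω = s} := by
  rw [setOf_Sy]
  exact (hmeas t _).1.inter ((hmeas t _).2.1.inter (hmeas t _).2.2)

lemma meas_W {X Y Z : ℕ → Ω → 𝒳} (hmeas : MeasProc X Y Z) (k t : ℕ) (w : Hist 𝒳 k) :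
    MeasurableSet {ω | W X Y Z k t ω = w} := by
  rw [setOf_W]
  have : blockEvent X Y Z t k w.1 w.2.1 w.2.2 =
      ⋂ i : Fin k, ({ω | X (t + i) ω = w.1 i} ∩ ({ω | Y (t + i) ω = w.2.1 i} ∩
        {ω | Z (t + i) ω = w.2.2 i})) := by
    ext ω; simp [blockEvent]
  rw [this]
  exact MeasurableSet.iInter fun i => (hmeas _ _).1.inter ((hmeas _ _).2.1.inter (hmeas _ _).2.2)

/-- The past at time `t`, split as in the Markov property. -/
abbrev Pst (X Y Z : ℕ → Ω → 𝒳) (k t : ℕ) (ω : Ω) : Hist 𝒳 t × Hist 𝒳 k :=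
  (W X Y Z t 0 ω, W X Y Z k t ω)

lemma setOf_Pst (X Y Z : ℕ → Ω → 𝒳) (k t : ℕ) (u : Hist 𝒳 t × Hist 𝒳 k) :
    {ω | Pst X Y Z k t ω = u} = {ω | W X Y Z t 0 ω = u.1} ∩ {ω | W X Y Z k t ω = u.2} := by
  ext ω; simp [Pst, Prod.ext_iff]

lemma meas_Pst {X Y Z : ℕ → Ω → 𝒳} (hmeas : MeasProc X Y Z) (k t : ℕ)
    (u : Hist 𝒳 t × Hist 𝒳 k) : MeasurableSet {ω | Pst X Y Z k t ω = u} := by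
  rw [setOf_Pst]
  exact (meas_W hmeas _ _ _).inter (meas_W hmeas _ _ _)

variable [Fintype 𝒳]

lemma markov_exp (μ : Measure Ω) [IsProbabilityMeasure μ] {X Y Z : ℕ → Ω → 𝒳} {k : ℕ}
    {Q : Hist 𝒳 k → Sym 𝒳 → ℝ} (hmeas : MeasProc X Y Z) (hM : MarkovOfOrder μ X Y Z k Q) (t : ℕ)
    (Ψ : Hist 𝒳 t × Hist 𝒳 k → Sym 𝒳 → ℝ) :
    ∫ ω, Ψ (Pst X Y Z k t ω) (Sy X Y Z (t + k) ω) ∂μ =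
      ∫ ω, (∑ s, Q (W X Y Z k t ω) s * Ψ (Pst X Y Z k t ω) s) ∂μ := by
  have hset : ∀ us : (Hist 𝒳 t × Hist 𝒳 k) × Sym 𝒳,
      {ω | (Pst X Y Z k t ω, Sy X Y Z (t + k) ω) = us} =
        {ω | Pst X Y Z k t ω = us.1} ∩ {ω | Sy X Y Z (t + k) ω = us.2} := by
    intro us; ext ω; simp only [Prod.ext_iff (y := us), Set.mem_ofPred_eq, Set.mem_inter_iff]
  have h1 := (integral_fin μ (fun ω => (Pst X Y Z k t ω, Sy X Y Z (t + k) ω))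
    (fun us => by rw [hset]; exact (meas_Pst hmeas _ _ _).inter (meas_Sy hmeas _ _))
    (fun us => Ψ us.1 us.2)).2
  have h2 := (integral_fin μ (Pst X Y Z k t) (meas_Pst hmeas _ _)
    (fun u => ∑ s, Q u.2 s * Ψ u s)).2
  rw [h1, h2, Fintype.sum_prod_type]
  refine Finset.sum_congr rfl fun u _ => ?_
  rw [Finset.sum_mul]
  refine Finset.sum_congr rfl fun s _ => ?_
  have h3 := hM t u.1.1 u.1.2.1 u.1.2.2 u.2.1 u.2.2.1 u.2.2.2 s
  rw [hset, setOf_Pst, setOf_W, setOf_W, setOf_Sy, h3]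
  ring

lemma stat_exp (μ : Measure Ω) [IsProbabilityMeasure μ] {X Y Z : ℕ → Ω → 𝒳} {k : ℕ}
    (hmeas : MeasProc X Y Z) (hS : Stationary μ X Y Z) (t : ℕ)
    (h : Hist 𝒳 k → ℝ) :
    ∫ ω, h (W X Y Z k t ω) ∂μ = ∑ w, mreal μ {ω | W X Y Z k 0 ω = w} * h w := by
  rw [(integral_fin μ (W X Y Z k t) (meas_W hmeas _ _) h).2]
  refine Finset.sum_congr rfl fun w _ => ?_
  rw [mul_comm, setOf_W, setOf_W, mreal, mreal, hS]

/-- The martingale sum. -/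
noncomputable def T {k : ℕ} (D : Hist 𝒳 k → Sym 𝒳 → ℝ) (X Y Z : ℕ → Ω → 𝒳) (m : ℕ) (ω : Ω) : ℝ :=
  ∑ t ∈ Finset.range m, D (W X Y Z k t ω) (Sy X Y Z (t + k) ω)

lemma T_factor {k : ℕ} (D : Hist 𝒳 k → Sym 𝒳 → ℝ) (X Y Z : ℕ → Ω → 𝒳) (m : ℕ) :
    ∃ τ : Hist 𝒳 m × Hist 𝒳 k → ℝ, ∀ ω, T D X Y Z m ω = τ (Pst X Y Z k m ω) := by
  have : Function.FactorsThrough (T D X Y Z m) (Pst X Y Z k m) := by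
    intro ω ω' h
    have hx : ∀ i < m + k, X i ω = X i ω' ∧ Y i ω = Y i ω' ∧ Z i ω = Z i ω' := by
      intro i hi
      simp only [Pst, Prod.mk.injEq] at h
      by_cases him : i < m
      · have := (win_eq_iff m _ _ _ 0 _ _ _).1 h.1 ⟨i, him⟩
        simpa using this
      · have := (win_eq_iff k _ _ _ m _ _ _).1 h.2 ⟨i - m, by omega⟩
        simpa [Nat.add_sub_cancel' (not_lt.1 him)] using this
    unfold T
    refine Finset.sum_congr rfl fun t ht => ?_
    have ht := Finset.mem_range.1 ht
    have e1 : W X Y Z k t ω = W X Y Z k t ω' :=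
      (win_eq_iff k _ _ _ t _ _ _).2 fun i => hx (t + i) (by omega)
    have e2 : Sy X Y Z (t + k) ω = Sy X Y Z (t + k) ω' := by
      obtain ⟨a, b, c⟩ := hx (t + k) (by omega)
      simp [Sy, sy, a, b, c]
    rw [e1, e2]
  obtain ⟨τ, hτ⟩ := (Function.factorsThrough_iff _).1 this
  exact ⟨τ, fun ω => congrFun hτ ω⟩

lemma T_int (μ : Measure Ω) [IsProbabilityMeasure μ] {X Y Z : ℕ → Ω → 𝒳} {k : ℕ}
    (hmeas : MeasProc X Y Z) (D : Hist 𝒳 k → Sym 𝒳 → ℝ) (m : ℕ) (φ : ℝ → ℝ) :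
    Integrable (fun ω => φ (T D X Y Z m ω)) μ := by
  obtain ⟨τ, hτ⟩ := T_factor D X Y Z m
  simp only [hτ]
  exact (integral_fin μ (Pst X Y Z k m) (meas_Pst hmeas _ _) (fun u => φ (τ u))).1

lemma exp_moment (μ : Measure Ω) [IsProbabilityMeasure μ] {X Y Z : ℕ → Ω → 𝒳} {k : ℕ}
    {Q : Hist 𝒳 k → Sym 𝒳 → ℝ} (hQ : IsTransMat Q)
    (hmeas : MeasProc X Y Z) (hM : MarkovOfOrder μ X Y Z k Q)
    (D : Hist 𝒳 k → Sym 𝒳 → ℝ) (hD : ∀ w, ∑ s, Q w s * D w s = 0) (C : ℝ)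
    (hC : ∀ w s, |D w s| ≤ C) (l : ℝ) (m : ℕ) :
    ∫ ω, Real.exp (l * T D X Y Z m ω) ∂μ ≤ Real.exp (l ^ 2 * C ^ 2 * m) := by
  induction m with
  | zero => simp [T]
  | succ m ih =>
    obtain ⟨τ, hτ⟩ := T_factor D X Y Z m
    have e : ∀ ω, Real.exp (l * T D X Y Z (m+1) ω) =
        Real.exp (l * τ (Pst X Y Z k m ω)) *
          Real.exp (l * D (Pst X Y Z k m ω).2 (Sy X Y Z (m + k) ω)) := by
      intro ω
      rw [← Real.exp_add, ← hτ, T, Finset.sum_range_succ, ← T, mul_add]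
    simp only [e]
    rw [markov_exp μ hmeas hM m
      (fun u s => Real.exp (l * τ u) * Real.exp (l * D u.2 s))]
    have hb : ∀ w, ∑ s, Q w s * Real.exp (l * D w s) ≤ Real.exp (l ^ 2 * C ^ 2) := by
      intro w
      have h1 : ∀ s, Real.exp (l * D w s) ≤ l * D w s + Real.exp (l ^ 2 * C ^ 2) := by
        intro s
        refine (exp_le_add_exp_sq _).trans ?_
        have : (l * D w s) ^ 2 ≤ l ^ 2 * C ^ 2 := by
          rw [mul_pow]
          exact mul_le_mul_of_nonneg_left (sq_le_sq' (abs_le.1 (hC w s)).1 (abs_le.1 (hC w s)).2)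
            (sq_nonneg _)
        have := Real.exp_le_exp.2 this
        linarith
      calc ∑ s, Q w s * Real.exp (l * D w s)
          ≤ ∑ s, Q w s * (l * D w s + Real.exp (l ^ 2 * C ^ 2)) :=
            Finset.sum_le_sum fun s _ => mul_le_mul_of_nonneg_left (h1 s) (hQ.1 w s)
        _ = l * ∑ s, Q w s * D w s + (∑ s, Q w s) * Real.exp (l ^ 2 * C ^ 2) := by
            simp only [mul_add, Finset.sum_add_distrib, Finset.sum_mul, Finset.mul_sum]
            congr 1
            exact Finset.sum_congr rfl fun _ _ => by ring
        _ = Real.exp (l ^ 2 * C ^ 2) := by rw [hD, hQ.2]; ring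
    calc ∫ ω, (∑ s, Q (W X Y Z k m ω) s * (Real.exp (l * τ (Pst X Y Z k m ω)) *
            Real.exp (l * D (Pst X Y Z k m ω).2 s))) ∂μ
        ≤ ∫ ω, Real.exp (l * T D X Y Z m ω) * Real.exp (l ^ 2 * C ^ 2) ∂μ := by
          refine integral_mono ?_ ?_ ?_
          · exact (integral_fin μ (Pst X Y Z k m) (meas_Pst hmeas _ _)
              (fun u => ∑ s, Q u.2 s * (Real.exp (l * τ u) * Real.exp (l * D u.2 s)))).1
          · exact (T_int μ hmeas D m (fun x => Real.exp (l * x))).mul_const _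
          · intro ω
            simp only [hτ]
            refine le_trans (le_of_eq ?_) (mul_le_mul_of_nonneg_left (hb (W X Y Z k m ω))
              (Real.exp_pos _).le)
            rw [Finset.mul_sum]
            exact Finset.sum_congr rfl fun _ _ => by ring
      _ = (∫ ω, Real.exp (l * T D X Y Z m ω) ∂μ) * Real.exp (l ^ 2 * C ^ 2) :=
          integral_mul_const _ _
      _ ≤ Real.exp (l ^ 2 * C ^ 2 * m) * Real.exp (l ^ 2 * C ^ 2) :=
          mul_le_mul_of_nonneg_right ih (Real.exp_pos _).le
      _ = Real.exp (l ^ 2 * C ^ 2 * ((m + 1 : ℕ) : ℝ)) := by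
          rw [← Real.exp_add]; push_cast; ring_nf

lemma moment8 (μ : Measure Ω) [IsProbabilityMeasure μ] {X Y Z : ℕ → Ω → 𝒳} {k : ℕ}
    {Q : Hist 𝒳 k → Sym 𝒳 → ℝ} (hQ : IsTransMat Q)
    (hmeas : MeasProc X Y Z) (hM : MarkovOfOrder μ X Y Z k Q)
    (D : Hist 𝒳 k → Sym 𝒳 → ℝ) (hD : ∀ w, ∑ s, Q w s * D w s = 0) (C : ℝ)
    (hC : ∀ w s, |D w s| ≤ C) (m : ℕ) :
    ∫ ω, (T D X Y Z m ω) ^ 8 / (m : ℝ) ^ 6 ∂μ ≤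
      (Nat.factorial 8 * 2 * Real.exp (C ^ 2)) * (1 / (m : ℝ) ^ 2) := by
  rcases Nat.eq_zero_or_pos m with h0 | h0
  · simp [h0]
  have hm : (0 : ℝ) < m := by exact_mod_cast h0
  set l : ℝ := (Real.sqrt m)⁻¹ with hl
  have hl2 : l ^ 2 = (m : ℝ)⁻¹ := by rw [hl, inv_pow, Real.sq_sqrt hm.le]
  have e1 := exp_moment μ hQ hmeas hM D hD C hC l m
  have e2 := exp_moment μ hQ hmeas hM D hD C hC (-l) m
  have e3 : l ^ 2 * C ^ 2 * m = C ^ 2 := by rw [hl2]; field_simp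
  rw [neg_sq] at e2
  rw [e3] at e1 e2
  have pt : ∀ x : ℝ, x ^ 8 / (m : ℝ) ^ 6 ≤
      (Nat.factorial 8 / (m : ℝ) ^ 2) * (Real.exp (l * x) + Real.exp (-l * x)) := by
    intro x
    have h1 := Real.pow_div_factorial_le_exp (|l * x|) (abs_nonneg _) 8
    have h2 : Real.exp |l * x| ≤ Real.exp (l * x) + Real.exp (-l * x) := by
      rw [neg_mul]
      rcases abs_choice (l * x) with h | h <;> rw [h]
      · linarith [Real.exp_pos (-(l * x))]
      · linarith [Real.exp_pos (l * x)]
    have h3 : |l * x| ^ 8 = x ^ 8 / (m : ℝ) ^ 4 := by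
      rw [Even.pow_abs (by decide), mul_pow, show l ^ 8 = (l ^ 2) ^ 4 by ring, hl2]
      field_simp
    rw [h3] at h1
    have h4 := mul_le_mul_of_nonneg_left (h1.trans h2)
      (show (0 : ℝ) ≤ Nat.factorial 8 / (m : ℝ) ^ 2 by positivity)
    refine le_trans (le_of_eq ?_) h4
    field_simp
  have i1 := T_int μ hmeas D m (fun x => Real.exp (l * x))
  have i2 := T_int μ hmeas D m (fun x => Real.exp (-l * x))
  calc ∫ ω, (T D X Y Z m ω) ^ 8 / (m : ℝ) ^ 6 ∂μ
      ≤ ∫ ω, (Nat.factorial 8 / (m : ℝ) ^ 2) * (Real.exp (l * T D X Y Z m ω) +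
          Real.exp (-l * T D X Y Z m ω)) ∂μ :=
        integral_mono (T_int μ hmeas D m (fun x => x ^ 8 / (m : ℝ) ^ 6))
          ((i1.add i2).const_mul _) (fun ω => pt _)
    _ = (Nat.factorial 8 / (m : ℝ) ^ 2) * (∫ ω, Real.exp (l * T D X Y Z m ω) ∂μ +
          ∫ ω, Real.exp (-l * T D X Y Z m ω) ∂μ) := by
        rw [integral_const_mul, integral_add i1 i2]
    _ ≤ (Nat.factorial 8 / (m : ℝ) ^ 2) * (Real.exp (C ^ 2) + Real.exp (C ^ 2)) :=
        mul_le_mul_of_nonneg_left (add_le_add e1 e2) (by positivity)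
    _ = _ := by ring

lemma ae_tendsto_of_summable (μ : Measure Ω) (f : ℕ → Ω → ℝ) (hf0 : ∀ n ω, 0 ≤ f n ω)
    (hfi : ∀ n, Integrable (f n) μ) (b : ℕ → ℝ) (hb : Summable b)
    (hfb : ∀ n, ∫ ω, f n ω ∂μ ≤ b n) :
    ∀ᵐ ω ∂μ, Tendsto (fun n => f n ω) atTop (𝓝 0) := by
  have h1 : ∫⁻ ω, ∑' n, ENNReal.ofReal (f n ω) ∂μ ≠ ⊤ := by
    rw [lintegral_tsum (fun n => (hfi n).1.aemeasurable.ennreal_ofReal)]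
    have h2 : ∀ n, ∫⁻ ω, ENNReal.ofReal (f n ω) ∂μ ≤ ENNReal.ofReal (b n) := by
      intro n
      rw [← ofReal_integral_eq_lintegral_ofReal (hfi n) (Eventually.of_forall (hf0 n))]
      exact ENNReal.ofReal_le_ofReal (hfb n)
    refine ne_top_of_le_ne_top ?_ (ENNReal.tsum_le_tsum h2)
    exact hb.tsum_ofReal_ne_top
  have h3 := ae_lt_top' (AEMeasurable.tsum
    (fun n => (hfi n).1.aemeasurable.ennreal_ofReal)) h1
  filter_upwards [h3] with ω hω
  have h4 := ENNReal.tendsto_atTop_zero_of_tsum_ne_top hω.ne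
  have h5 := (ENNReal.tendsto_toReal ENNReal.zero_ne_top).comp h4
  simpa [Function.comp_def, ENNReal.toReal_ofReal (hf0 _ _)] using h5

lemma T_tendsto (μ : Measure Ω) [IsProbabilityMeasure μ] {X Y Z : ℕ → Ω → 𝒳} {k : ℕ}
    {Q : Hist 𝒳 k → Sym 𝒳 → ℝ} (hQ : IsTransMat Q)
    (hmeas : MeasProc X Y Z) (hM : MarkovOfOrder μ X Y Z k Q)
    (D : Hist 𝒳 k → Sym 𝒳 → ℝ) (hD : ∀ w, ∑ s, Q w s * D w s = 0) :
    ∀ᵐ ω ∂μ, Tendsto (fun m : ℕ => (T D X Y Z m ω) ^ 2 / ((m : ℝ) * Real.sqrt m)) atTop (𝓝 0) := by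
  obtain ⟨C, hC⟩ : ∃ C, ∀ p : Hist 𝒳 k × Sym 𝒳, |D p.1 p.2| ≤ C := by
    obtain ⟨C, hC⟩ := (Set.finite_range (fun p : Hist 𝒳 k × Sym 𝒳 => |D p.1 p.2|)).bddAbove
    exact ⟨C, fun p => hC ⟨p, rfl⟩⟩
  have := ae_tendsto_of_summable μ (fun m ω => (T D X Y Z m ω) ^ 8 / (m : ℝ) ^ 6)
    (fun m ω => by positivity) (fun m => T_int μ hmeas D m (fun x => x ^ 8 / (m : ℝ) ^ 6))
    (fun m => (Nat.factorial 8 * 2 * Real.exp (C ^ 2)) * (1 / (m : ℝ) ^ 2))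
    ((Real.summable_one_div_nat_pow.2 (by norm_num)).mul_left _)
    (moment8 μ hQ hmeas hM D hD C (fun w s => hC (w, s)))
  filter_upwards [this] with ω hω
  have h2 := (Real.continuous_sqrt.tendsto 0).comp hω
  simp only [Real.sqrt_zero] at h2
  have h3 := (Real.continuous_sqrt.tendsto 0).comp h2
  simp only [Real.sqrt_zero] at h3
  refine h3.congr fun m => ?_
  simp only [Function.comp_apply]
  have hm : (0 : ℝ) ≤ m := Nat.cast_nonneg m
  have e : (T D X Y Z m ω) ^ 8 / (m : ℝ) ^ 6 =
      (((T D X Y Z m ω) ^ 2 / ((m : ℝ) * Real.sqrt m)) ^ 2) ^ 2 := by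
    rw [← pow_mul, div_pow, mul_pow, ← pow_mul, show Real.sqrt m ^ (2 * 2) = (Real.sqrt m ^ 2) ^ 2 by ring,
      Real.sq_sqrt hm]
    ring_nf
  rw [e, Real.sqrt_sq (by positivity), Real.sqrt_sq (by positivity)]

end helpers2
end DIG
namespace DIG
section helpers3
variable {𝒳 : Type*} {Ω : Type*} [MeasurableSpace Ω] [Fintype 𝒳]

lemma block_tendsto [Nonempty 𝒳] (μ : Measure Ω) [IsProbabilityMeasure μ] {X Y Z : ℕ → Ω → 𝒳}
    {k : ℕ} {Q : Hist 𝒳 k → Sym 𝒳 → ℝ} (hQ : IsTransMat Q) (hQpos : ∀ h s, 0 < Q h s)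
    (hmeas : MeasProc X Y Z) (hM : MarkovOfOrder μ X Y Z k Q) (hS : Stationary μ X Y Z)
    (v : Hist 𝒳 (k+1)) :
    ∀ᵐ ω ∂μ, Tendsto (fun m : ℕ => Real.sqrt m * ((m : ℝ)⁻¹ *
      (∑ t ∈ Finset.range m, if W X Y Z (k+1) t ω = v then (1 : ℝ) else 0) -
        mreal μ {ω | W X Y Z (k+1) 0 ω = v}) ^ 2) atTop (𝓝 0) := by
  set c := mreal μ {ω | W X Y Z (k+1) 0 ω = v} with hc
  set p : Hist 𝒳 k → ℝ := fun w => mreal μ {ω | W X Y Z k 0 ω = w} with hp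
  let f : Hist 𝒳 k → Sym 𝒳 → ℝ := fun w s => if extd w s = v then 1 else 0
  have hp1 : ∑ w, p w = 1 := by
    have := stat_exp μ hmeas hS 0 (fun _ : Hist 𝒳 k => (1 : ℝ))
    simpa using this.symm
  have hinv : ∀ h : Hist 𝒳 k → ℝ,
      ∑ w, p w * ∑ s, Q w s * h (drp (extd w s)) = ∑ w, p w * h w := by
    intro h
    rw [← stat_exp μ hmeas hS 1 h,
      ← stat_exp μ hmeas hS 0 (fun w => ∑ s, Q w s * h (drp (extd w s)))]
    rw [← markov_exp μ hmeas hM 0 (fun u s => h (drp (extd u.2 s)))]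
    refine integral_congr_ae (Eventually.of_forall fun ω => ?_)
    exact congrArg h (drp_extd_win k _ _ _ 0)
  have hF : ∑ w, p w * ∑ s, Q w s * f w s = c := by
    rw [← stat_exp μ hmeas hS 0 (fun w => ∑ s, Q w s * f w s),
      ← markov_exp μ hmeas hM 0 (fun u s => f u.2 s)]
    have : ∀ ω, f (Pst X Y Z k 0 ω).2 (Sy X Y Z (0 + k) ω) =
        (fun w => if w = v then (1 : ℝ) else 0) (W X Y Z (k+1) 0 ω) := by
      intro ω
      simp only [f, Pst, W, Sy, extd_win]
    simp only [this]
    rw [(integral_fin μ (W X Y Z (k+1) 0) (meas_W hmeas _ _)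
      (fun w => if w = v then (1 : ℝ) else 0)).2]
    simp [hc]
  obtain ⟨h, hh⟩ := poisson Q hQ hQpos p hp1 hinv (fun w => ∑ s, Q w s * f w s)
  simp only [hF] at hh
  let D : Hist 𝒳 k → Sym 𝒳 → ℝ := fun w s => f w s - c - h w + h (drp (extd w s))
  have hD : ∀ w, ∑ s, Q w s * D w s = 0 := by
    intro w
    simp only [D, mul_add, mul_sub, Finset.sum_add_distrib, Finset.sum_sub_distrib,
      ← Finset.sum_mul, hQ.2 w]
    linarith [hh w]
  obtain ⟨M, hMb⟩ : ∃ M, ∀ w, |h w| ≤ M := by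
    obtain ⟨C, hC⟩ := (Set.finite_range (fun w => |h w|)).bddAbove
    exact ⟨C, fun p => hC ⟨p, rfl⟩⟩
  filter_upwards [T_tendsto μ hQ hmeas hM D hD] with ω hω
  have hT : ∀ m : ℕ, (∑ t ∈ Finset.range m, if W X Y Z (k+1) t ω = v then (1 : ℝ) else 0) - m * c =
      T D X Y Z m ω + h (W X Y Z k 0 ω) - h (W X Y Z k m ω) := by
    intro m
    induction m with
    | zero => simp [T]
    | succ m ih =>
      have : T D X Y Z (m+1) ω = T D X Y Z m ω + ((if W X Y Z (k+1) m ω = v then (1 : ℝ) else 0) - c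
          - h (W X Y Z k m ω) + h (W X Y Z k (m+1) ω)) := by
        rw [T, Finset.sum_range_succ, ← T]
        simp only [D, f, W, Sy, extd_win, drp_win]
      rw [this, Finset.sum_range_succ]
      push_cast
      linarith
  have hz : Tendsto (fun m : ℕ => 2 * ((T D X Y Z m ω) ^ 2 / ((m : ℝ) * Real.sqrt m)) +
      8 * M ^ 2 / ((m : ℝ) * Real.sqrt m)) atTop (𝓝 0) := by
    have ht : Tendsto (fun m : ℕ => (m : ℝ) * Real.sqrt m) atTop atTop :=
      tendsto_natCast_atTop_atTop.atTop_mul_atTop₀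
        (Real.tendsto_sqrt_atTop.comp tendsto_natCast_atTop_atTop)
    simpa using (hω.const_mul 2).add (tendsto_const_nhds.div_atTop ht)
  refine squeeze_zero' (Eventually.of_forall fun m => by positivity) ?_ hz
  filter_upwards [eventually_gt_atTop 0] with m hm0
  have hm : (0 : ℝ) < m := by exact_mod_cast hm0
  have hs : 0 < Real.sqrt m := Real.sqrt_pos.2 hm
  have hss : Real.sqrt m * Real.sqrt m = m := Real.mul_self_sqrt hm.le
  set A := (∑ t ∈ Finset.range m, if W X Y Z (k+1) t ω = v then (1 : ℝ) else 0)
  have e1 : Real.sqrt m * ((m : ℝ)⁻¹ * A - c) ^ 2 = (A - m * c) ^ 2 / ((m : ℝ) * Real.sqrt m) := by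
    have : (m : ℝ)⁻¹ * A - c = (A - m * c) / m := by field_simp
    rw [this, div_pow, eq_div_iff (by positivity)]
    calc Real.sqrt m * ((A - m * c) ^ 2 / (m : ℝ) ^ 2) * (m * Real.sqrt m)
        = (Real.sqrt m * Real.sqrt m) * m * ((A - m * c) ^ 2 / (m : ℝ) ^ 2) := by ring
      _ = _ := by rw [hss]; field_simp
  rw [e1, hT, ← mul_div_assoc, ← add_div]
  refine div_le_div_of_nonneg_right ?_ (by positivity)
  have b1 := abs_le.1 (hMb (W X Y Z k 0 ω))
  have b2 := abs_le.1 (hMb (W X Y Z k m ω))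
  set a := T D X Y Z m ω
  have b3 : (h (W X Y Z k 0 ω) - h (W X Y Z k m ω)) ^ 2 ≤ (2 * M) ^ 2 :=
    sq_le_sq' (by linarith) (by linarith)
  nlinarith [sq_nonneg (a - (h (W X Y Z k 0 ω) - h (W X Y Z k m ω)))]

lemma null_block (μ : Measure Ω) [IsProbabilityMeasure μ] {X Y Z : ℕ → Ω → 𝒳}
    {k : ℕ} (hS : Stationary μ X Y Z) :
    ∀ᵐ ω ∂μ, ∀ v : Hist 𝒳 (k+1), mreal μ {ω | W X Y Z (k+1) 0 ω = v} = 0 →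
      ∀ t, W X Y Z (k+1) t ω ≠ v := by
  refine ae_all_iff.2 fun v => ?_
  by_cases h : mreal μ {ω | W X Y Z (k+1) 0 ω = v} = 0
  · have : ∀ᵐ ω ∂μ, ∀ t, W X Y Z (k+1) t ω ≠ v := by
      refine ae_all_iff.2 fun t => ?_
      rw [ae_iff]
      simp only [ne_eq, not_not]
      rw [setOf_W, hS, ← setOf_W]
      exact ((ENNReal.toReal_eq_zero_iff _).1 h).resolve_right (measure_ne_top _ _)
    filter_upwards [this] with ω hω _ using hω
  · exact Eventually.of_forall fun ω h' => absurd h' h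

/-- Deterministic conclusion. -/
lemma kl_tendsto {V S : Type*} [Fintype V] [Fintype S] [DecidableEq S] (g : V → S)
    (P : ℕ → V → ℝ) (q : V → ℝ) (hP : ∀ m v, 0 ≤ P m v) (hq : ∀ v, 0 ≤ q v)
    (hP1 : ∀ m, 0 < m → ∑ v, P m v = 1) (hq1 : ∑ v, q v = 1)
    (h0 : ∀ v, q v = 0 → ∀ m, P m v = 0)
    (ht : ∀ v, Tendsto (fun m : ℕ => Real.sqrt m * (P m v - q v) ^ 2) atTop (𝓝 0)) :
    Tendsto (fun m : ℕ => Real.sqrt m * KLfin (pushf g (P m)) (pushf g q)) atTop (𝓝 0) := by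
  have push_nn : ∀ r : V → ℝ, (∀ v, 0 ≤ r v) → ∀ s, 0 ≤ pushf g r s := fun r hr s =>
    Finset.sum_nonneg fun v _ => by split_ifs <;> simp [hr v]
  have push_sum : ∀ r : V → ℝ, ∑ s, pushf g r s = ∑ v, r v := by
    intro r
    simp only [pushf]
    rw [Finset.sum_comm]
    simp
  have push_zero : ∀ m s, pushf g q s = 0 → pushf g (P m) s = 0 := by
    intro m s hs
    have h1 := (Finset.sum_eq_zero_iff_of_nonneg
      (fun v _ => by split_ifs <;> simp [hq v])).1 hs
    refine Finset.sum_eq_zero fun v hv => ?_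
    have h2 := h1 v hv
    split_ifs with hg
    · rw [if_pos hg] at h2
      exact h0 v h2 m
    · rfl
  have hsq : ∀ m s, (pushf g (P m) s - pushf g q s) ^ 2 ≤
      Fintype.card V * ∑ v, (P m v - q v) ^ 2 := by
    intro m s
    have e : pushf g (P m) s - pushf g q s = ∑ v, (if g v = s then P m v - q v else 0) := by
      simp only [pushf]
      rw [← Finset.sum_sub_distrib]
      exact Finset.sum_congr rfl fun v _ => by split_ifs <;> simp
    rw [e]
    refine (sq_sum_le_card_mul_sum_sq).trans ?_
    refine mul_le_mul_of_nonneg_left (Finset.sum_le_sum fun v _ => ?_) (Nat.cast_nonneg _)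
    split_ifs
    · exact le_rfl
    · simpa using sq_nonneg (P m v - q v)
  have hz : Tendsto (fun m : ℕ => ∑ s, (Fintype.card V *
      ∑ v, Real.sqrt m * (P m v - q v) ^ 2) / pushf g q s) atTop (𝓝 0) := by
    have : (0 : ℝ) = ∑ s, (Fintype.card V * ∑ v : V, (0 : ℝ)) / pushf g q s := by simp
    rw [this]
    exact tendsto_finsetSum _ fun s _ =>
      ((tendsto_finsetSum _ fun v _ => ht v).const_mul _).div_const _
  refine squeeze_zero' ?_ ?_ hz
  · filter_upwards [eventually_gt_atTop 0] with m hm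
    refine mul_nonneg (Real.sqrt_nonneg _) ?_
    have : ∑ s, (pushf g (P m) s - pushf g q s) ≤ KLfin (pushf g (P m)) (pushf g q) :=
      Finset.sum_le_sum fun s _ => (kl_term _ _ (push_nn _ (hP m) s) (push_nn _ hq s)
        (push_zero m s)).1
    rw [Finset.sum_sub_distrib, push_sum, push_sum, hP1 m hm, hq1] at this
    linarith
  · filter_upwards [eventually_gt_atTop 0] with m hm
    have : KLfin (pushf g (P m)) (pushf g q) ≤ ∑ s, ((pushf g (P m) s - pushf g q s) +
        (pushf g (P m) s - pushf g q s) ^ 2 / pushf g q s) :=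
      Finset.sum_le_sum fun s _ => (kl_term _ _ (push_nn _ (hP m) s) (push_nn _ hq s)
        (push_zero m s)).2
    rw [Finset.sum_add_distrib, Finset.sum_sub_distrib, push_sum, push_sum, hP1 m hm, hq1,
      sub_self, zero_add] at this
    refine (mul_le_mul_of_nonneg_left this (Real.sqrt_nonneg _)).trans ?_
    rw [Finset.mul_sum]
    refine Finset.sum_le_sum fun s _ => ?_
    rw [← mul_div_assoc]
    refine div_le_div_of_nonneg_right ?_ (push_nn _ hq s)
    rw [← Finset.mul_sum, mul_left_comm]
    exact mul_le_mul_of_nonneg_left (hsq m s) (Real.sqrt_nonneg _)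

end helpers3
end DIG

namespace DIG

/-- Under Assumptions 1–2, `√(n−k)·D(P̂^{(n)}‖P̄) → 0` almost surely,
and the same holds for every pair of corresponding marginals (pushforwards along any map
`g` into a finite set; `g = id` recovers the full distributions). -/
theorem sqrt_scaled_KL_emp_stat_tendsto_zero
    {𝒳 : Type*} [Fintype 𝒳] [DecidableEq 𝒳] [Nonempty 𝒳]
    {Ω : Type*} [MeasurableSpace Ω]
    (μ : MeasureTheory.Measure Ω) [MeasureTheory.IsProbabilityMeasure μ]
    (X Y Z : ℕ → Ω → 𝒳) (k : ℕ) (Q : Hist 𝒳 k → Sym 𝒳 → ℝ)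
    (hmeas : MeasProc X Y Z)
    (hQ : IsTransMat Q) (hQpos : ∀ h s, 0 < Q h s)
    (hMarkov : MarkovOfOrder μ X Y Z k Q)
    (hstat : Stationary μ X Y Z) :
    ∀ (S : Type) [Fintype S] [DecidableEq S]
      (g : Blk 𝒳 (k+1) × Blk 𝒳 (k+1) × Blk 𝒳 (k+1) → S),
      ∀ᵐ ω ∂μ,
        Tendsto (fun n => Real.sqrt ((n - k : ℕ) : ℝ) *
            KLfin (pushf g (fun w => empDist X Y Z k n w.1 w.2.1 w.2.2 ω))
              (pushf g (fun w => statDist μ X Y Z k w.1 w.2.1 w.2.2)))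
          atTop (𝓝 0) := by
  intro S _ _ g
  have hall := ae_all_iff.2 (block_tendsto μ hQ hQpos hmeas hMarkov hstat)
  filter_upwards [hall, null_block μ (k := k) hstat] with ω h1 h2
  let P : ℕ → Blk 𝒳 (k+1) × Blk 𝒳 (k+1) × Blk 𝒳 (k+1) → ℝ := fun m v =>
    (m : ℝ)⁻¹ * (∑ t ∈ Finset.range m, if W X Y Z (k+1) t ω = v then (1 : ℝ) else 0)
  let q : Blk 𝒳 (k+1) × Blk 𝒳 (k+1) × Blk 𝒳 (k+1) → ℝ := fun v =>
    mreal μ {ω | W X Y Z (k+1) 0 ω = v}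
  have hPe : ∀ n, (fun w : Blk 𝒳 (k+1) × Blk 𝒳 (k+1) × Blk 𝒳 (k+1) =>
      empDist X Y Z k n w.1 w.2.1 w.2.2 ω) = P (n - k) := by
    intro n
    funext ⟨a, b, c⟩
    simp only [empDist, empDistSeq, P]
    congr 1
    refine Finset.sum_congr rfl fun t _ => ?_
    refine if_congr ?_ rfl rfl
    exact (win_eq_iff (k+1) (fun i => X i ω) (fun i => Y i ω) (fun i => Z i ω) t a b c).symm
  have hqe : (fun w : Blk 𝒳 (k+1) × Blk 𝒳 (k+1) × Blk 𝒳 (k+1) =>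
      statDist μ X Y Z k w.1 w.2.1 w.2.2) = q := by
    funext w
    simp only [statDist, q, setOf_W]
  have h1' : ∀ v, Tendsto (fun m : ℕ => Real.sqrt m * (P m v - q v) ^ 2) atTop (𝓝 0) := by
    intro v
    refine (h1 v).congr fun m => ?_
    simp only [P, q]
    congr!
  simp only [hPe, hqe]
  have main := kl_tendsto g P q
    (fun m v => mul_nonneg (inv_nonneg.2 (Nat.cast_nonneg _))
      (Finset.sum_nonneg fun t _ => by split_ifs <;> norm_num))
    (fun v => ENNReal.toReal_nonneg)
    (by
      intro m hm
      have hm' : (m : ℝ) ≠ 0 := by exact_mod_cast hm.ne'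
      simp only [P]
      rw [← Finset.mul_sum, Finset.sum_comm]
      simp [hm'])
    (by
      have := stat_exp μ hmeas hstat 0 (fun _ : Hist 𝒳 (k+1) => (1 : ℝ))
      simpa using this.symm)
    (by
      intro v hv m
      simp [P, h2 v hv])
    h1'
  exact main.comp (tendsto_sub_atTop_nat k)

end DIG
end

section
/- Under Assumptions 1–3, the directed information rate I(X→Y‖Z) := lim_{n→∞} (1/n)·Σ_{i=1}^{n} I(Y_i; X_1^i | Y_1^{i−1}, Z_1^i) exists and equals I(Ȳ_{k+1}; X̄_1^{k+1} | Ȳ_1^k, Z̄_1^{k+1}), the conditional mutual information computed under the stationary distribution of (k+1)-blocks; without Assumption 3 (under Assumptions 1–2 only), every term I(Y_i; X_1^i | Y_1^{i−1}, Z_1^i) with i > k is at most I(Ȳ_{k+1}; X̄_1^{k+1} | Ȳ_1^k, Z̄_1^{k+1}). -/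
open MeasureTheory Filter Finset
open scoped BigOperators Topology ENNReal NNReal Classical

namespace DIG

section helpers

variable {𝒳 : Type*} [Fintype 𝒳] [DecidableEq 𝒳] [Nonempty 𝒳]
variable {Ω : Type*} [MeasurableSpace Ω]

/-- All fibres of `T` are measurable. -/
def FM {S : Type*} (T : Ω → S) : Prop := ∀ s, MeasurableSet {ω | T ω = s}

lemma FM.prod {S T : Type*} {U : Ω → S} {V : Ω → T} (hU : FM U) (hV : FM V) :
    FM (fun ω => (U ω, V ω)) := by
  intro ⟨s, t⟩
  have : {ω | (U ω, V ω) = (s, t)} = {ω | U ω = s} ∩ {ω | V ω = t} := by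
    ext ω; simp
  rw [this]; exact (hU s).inter (hV t)

lemma FM.pi {S : Type*} {n : ℕ} {U : Fin n → Ω → S} (hU : ∀ i, FM (U i)) :
    FM (fun ω (i : Fin n) => U i ω) := by
  intro s
  have : {ω | (fun i => U i ω) = s} = ⋂ i, {ω | U i ω = s i} := by
    ext ω; simp [funext_iff]
  rw [this]; exact MeasurableSet.iInter fun i => hU i _

lemma sum_int {S : Type*} [Fintype S] (μ : Measure Ω) [IsProbabilityMeasure μ]
    {T : Ω → S} (hT : FM T) (f : S → ℝ) :
    Integrable (fun ω => f (T ω)) μ ∧ ∑ s, mreal μ {ω | T ω = s} * f s = ∫ ω, f (T ω) ∂μ := by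
  have e : (fun ω => f (T ω)) = fun ω => ∑ s, Set.indicator {ω | T ω = s} (fun _ => f s) ω := by
    funext ω
    simp [Set.indicator_apply]
  have hi : ∀ s, Integrable (Set.indicator {ω | T ω = s} (fun _ => f s)) μ := fun s =>
    (integrable_const _).indicator (hT s)
  rw [e]
  refine ⟨integrable_finsetSum _ fun s _ => hi s, ?_⟩
  rw [integral_finsetSum _ fun s _ => hi s]
  refine Finset.sum_congr rfl fun s _ => ?_
  rw [integral_indicator_const _ (hT s)]
  simp [mreal, Measure.real]

lemma ae_pos {S : Type*} [Fintype S] (μ : Measure Ω) [IsProbabilityMeasure μ]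
    (T : Ω → S) : ∀ᵐ ω ∂μ, 0 < mreal μ {ω' | T ω' = T ω} := by
  have : {ω | ¬ 0 < mreal μ {ω' | T ω' = T ω}} ⊆
      ⋃ s ∈ {s : S | μ {ω | T ω = s} = 0}, {ω | T ω = s} := by
    intro ω hω
    simp only [Set.mem_ofPred_eq, mreal, not_lt] at hω
    have h0 := le_antisymm hω ENNReal.toReal_nonneg
    rw [ENNReal.toReal_eq_zero_iff] at h0
    simp only [Set.mem_iUnion, Set.mem_ofPred_eq]
    exact ⟨T ω, h0.resolve_right (measure_ne_top _ _), rfl⟩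
  refine measure_mono_null this ?_
  rw [measure_biUnion_null_iff (Set.toFinite _).countable]
  intro s hs; exact hs

lemma sum_fib {S : Type*} [Fintype S] (μ : Measure Ω) [IsProbabilityMeasure μ]
    {T : Ω → S} (hT : FM T) (E : Set Ω) :
    ∑ s, mreal μ (E ∩ {ω | T ω = s}) = mreal μ E := by
  have h : E = ⋃ s ∈ (Finset.univ : Finset S), (E ∩ {ω | T ω = s}) := by
    ext ω; simp
  have h2 : μ E = ∑ s, μ (E ∩ {ω | T ω = s}) := by
    have := measure_biUnion_finset₀ (μ := μ.restrict E) (s := (Finset.univ : Finset S))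
      (f := fun s => {ω | T ω = s}) ?_ (fun s _ => (hT s).nullMeasurableSet)
    · have hu : (⋃ s ∈ (Finset.univ : Finset S), {ω | T ω = s}) = Set.univ := by
        ext ω; simp
      rw [hu, Measure.restrict_apply_univ] at this
      rw [this]
      refine Finset.sum_congr rfl fun s _ => ?_
      rw [Measure.restrict_apply (hT s), Set.inter_comm]
    · intro s _ t _ hst
      refine Disjoint.aedisjoint ?_
      rw [Set.disjoint_left]
      intro ω h1 h2
      exact hst (h1.symm.trans h2)
  unfold mreal
  rw [h2, ENNReal.toReal_sum fun s _ => measure_ne_top _ _]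

lemma mreal_nonneg (μ : Measure Ω) (s : Set Ω) : 0 ≤ mreal μ s := ENNReal.toReal_nonneg

lemma mreal_mono (μ : Measure Ω) [IsProbabilityMeasure μ] {s t : Set Ω} (h : s ⊆ t) :
    mreal μ s ≤ mreal μ t :=
  ENNReal.toReal_mono (measure_ne_top _ _) (measure_mono h)

section cmi
variable {A B C : Type*} [Fintype A] [Fintype B] [Fintype C]
    [DecidableEq A] [DecidableEq B] [DecidableEq C]

lemma cmi_int (μ : Measure Ω) [IsProbabilityMeasure μ] {U : Ω → A} {V : Ω → B} {W : Ω → C}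
    (hU : FM U) (hV : FM V) (hW : FM W) :
    Integrable (fun ω => Real.log ((mreal μ {ω' | U ω' = U ω ∧ V ω' = V ω ∧ W ω' = W ω} *
        mreal μ {ω' | W ω' = W ω}) /
        (mreal μ {ω' | U ω' = U ω ∧ W ω' = W ω} * mreal μ {ω' | V ω' = V ω ∧ W ω' = W ω}))) μ ∧
    cmiRV μ U V W = ∫ ω, Real.log ((mreal μ {ω' | U ω' = U ω ∧ V ω' = V ω ∧ W ω' = W ω} *
        mreal μ {ω' | W ω' = W ω}) /
        (mreal μ {ω' | U ω' = U ω ∧ W ω' = W ω} * mreal μ {ω' | V ω' = V ω ∧ W ω' = W ω})) ∂μ := by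
  have h := sum_int μ (hU.prod (hV.prod hW)) (fun s : A × B × C =>
    Real.log ((mreal μ {ω' | U ω' = s.1 ∧ V ω' = s.2.1 ∧ W ω' = s.2.2} *
        mreal μ {ω' | W ω' = s.2.2}) /
        (mreal μ {ω' | U ω' = s.1 ∧ W ω' = s.2.2} * mreal μ {ω' | V ω' = s.2.1 ∧ W ω' = s.2.2})))
  refine ⟨h.1, ?_⟩
  rw [← h.2]
  simp only [Fintype.sum_prod_type, Prod.mk.injEq]
  rfl

lemma cmi_zero (μ : Measure Ω) {U : Ω → A} {V : Ω → B} {W : Ω → C}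
    (h : ∀ a b c, mreal μ {ω | U ω = a ∧ V ω = b ∧ W ω = c} * mreal μ {ω | W ω = c} =
      mreal μ {ω | U ω = a ∧ W ω = c} * mreal μ {ω | V ω = b ∧ W ω = c}) :
    cmiRV μ U V W = 0 := by
  unfold cmiRV
  refine Finset.sum_eq_zero fun a _ => Finset.sum_eq_zero fun b _ => Finset.sum_eq_zero fun c _ => ?_
  rw [h a b c, Real.log_div_self, mul_zero]

lemma term_bound {p u v w : ℝ} (hp : 0 ≤ p) (hu : p ≤ u) (hv : p ≤ v) (hw : u ≤ w) :
    p - u * v / w ≤ p * Real.log (p * w / (u * v)) := by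
  rcases hp.eq_or_lt with rfl | hp
  · have : 0 ≤ u * v / w := div_nonneg (mul_nonneg hu hv) (hu.trans hw)
    simp; linarith
  have hu' : 0 < u := hp.trans_le hu
  have hv' : 0 < v := hp.trans_le hv
  have hw' : 0 < w := hu'.trans_le hw
  have := Real.one_sub_inv_le_log_of_pos (x := p * w / (u * v)) (by positivity)
  calc p - u * v / w = p * (1 - (p * w / (u * v))⁻¹) := by field_simp
    _ ≤ _ := mul_le_mul_of_nonneg_left this hp.le

lemma cmi_nonneg (μ : Measure Ω) [IsProbabilityMeasure μ] {U : Ω → A} {V : Ω → B} {W : Ω → C}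
    (hU : FM U) (hV : FM V) : 0 ≤ cmiRV μ U V W := by
  have h1 : ∑ a : A, ∑ b : B, ∑ c : C, (mreal μ {ω | U ω = a ∧ V ω = b ∧ W ω = c} -
      mreal μ {ω | U ω = a ∧ W ω = c} * mreal μ {ω | V ω = b ∧ W ω = c} /
        mreal μ {ω | W ω = c}) ≤ cmiRV μ U V W := by
    unfold cmiRV
    refine Finset.sum_le_sum fun a _ => Finset.sum_le_sum fun b _ => Finset.sum_le_sum fun c _ => ?_
    exact term_bound (mreal_nonneg _ _) (mreal_mono _ fun ω h => ⟨h.1, h.2.2⟩)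
      (mreal_mono _ fun ω h => h.2) (mreal_mono _ fun ω h => h.2)
  refine le_trans (le_of_eq ?_) h1
  have hUW : ∀ c, ∑ a, mreal μ {ω | U ω = a ∧ W ω = c} = mreal μ {ω | W ω = c} := by
    intro c
    rw [← sum_fib μ hU {ω | W ω = c}]
    refine Finset.sum_congr rfl fun a _ => congrArg _ ?_
    ext ω; simp [and_comm]
  have hVW : ∀ c, ∑ a, mreal μ {ω | V ω = a ∧ W ω = c} = mreal μ {ω | W ω = c} := by
    intro c
    rw [← sum_fib μ hV {ω | W ω = c}]
    refine Finset.sum_congr rfl fun a _ => congrArg _ ?_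
    ext ω; simp [and_comm]
  have hUVW : ∀ a c, ∑ b, mreal μ {ω | U ω = a ∧ V ω = b ∧ W ω = c} =
      mreal μ {ω | U ω = a ∧ W ω = c} := by
    intro a c
    rw [← sum_fib μ hV {ω | U ω = a ∧ W ω = c}]
    refine Finset.sum_congr rfl fun b _ => congrArg _ ?_
    ext ω; simp; tauto
  symm
  have hc : ∀ c : C, ∑ a : A, ∑ b : B, (mreal μ {ω | U ω = a ∧ V ω = b ∧ W ω = c} -
      mreal μ {ω | U ω = a ∧ W ω = c} * mreal μ {ω | V ω = b ∧ W ω = c} /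
        mreal μ {ω | W ω = c}) = 0 := by
    intro c
    simp only [Finset.sum_sub_distrib, hUVW, hUW, ← Finset.sum_div, ← Finset.mul_sum, hVW,
      ← Finset.sum_mul]
    rw [mul_self_div_self, sub_self]
  calc _ = ∑ a : A, ∑ c : C, ∑ b : B, (mreal μ {ω | U ω = a ∧ V ω = b ∧ W ω = c} -
      mreal μ {ω | U ω = a ∧ W ω = c} * mreal μ {ω | V ω = b ∧ W ω = c} /
        mreal μ {ω | W ω = c}) := Finset.sum_congr rfl fun a _ => Finset.sum_comm
    _ = _ := by
      rw [Finset.sum_comm]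
      exact Finset.sum_eq_zero fun c _ => hc c

end cmi

lemma split_add (P : ℕ → Prop) (j n : ℕ) :
    (∀ m : Fin (j + n), P m) ↔ (∀ m : Fin j, P m) ∧ ∀ m : Fin n, P (j + m) := by
  constructor
  · intro h
    exact ⟨fun m => h ⟨m, by omega⟩, fun m => h ⟨j + m, by omega⟩⟩
  · rintro ⟨h1, h2⟩ ⟨m, hm⟩
    by_cases hj : m < j
    · exact h1 ⟨m, hj⟩
    · have := h2 ⟨m - j, by omega⟩
      simpa [show j + (m - j) = m by omega] using this

lemma split_add_succ (P : ℕ → Prop) (j k : ℕ) :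
    (∀ m : Fin (j + k + 1), P m) ↔ (∀ m : Fin j, P m) ∧ ∀ m : Fin (k + 1), P (j + m) :=
  split_add P j (k + 1)

lemma split_last (P : ℕ → Prop) (k : ℕ) :
    (∀ m : Fin (k + 1), P m) ↔ (∀ m : Fin k, P m) ∧ P k := by
  rw [split_add]; simp

lemma blockEvent_meas {X Y Z : ℕ → Ω → 𝒳} (h : MeasProc X Y Z) (t L : ℕ) (a b c : Blk 𝒳 L) :
    MeasurableSet (blockEvent X Y Z t L a b c) := by
  have : blockEvent X Y Z t L a b c = ⋂ i : Fin L, ({ω | X (t + i) ω = a i} ∩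
      ({ω | Y (t + i) ω = b i} ∩ {ω | Z (t + i) ω = c i})) := by
    ext ω; simp [blockEvent]
  rw [this]
  exact MeasurableSet.iInter fun i => (h _ _).1.inter ((h _ _).2.1.inter (h _ _).2.2)

/-- The stationary conditional mutual information as an integral at shift `j`. -/
lemma condMI_int (μ : Measure Ω) [IsProbabilityMeasure μ] (X Y Z : ℕ → Ω → 𝒳) (k j : ℕ)
    (hmeas : MeasProc X Y Z) (hstat : Stationary μ X Y Z) :
    condMI (statDist μ X Y Z k) =
      cmiRV μ (fun ω => Y (j + k) ω) (fun ω (m : Fin (k+1)) => X (j + m) ω)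
        (fun ω => ((fun m : Fin k => Y (j + m) ω), (fun m : Fin (k+1) => Z (j + m) ω))) := by
  have fX : ∀ i, FM (X i) := fun i x => (hmeas i x).1
  have fY : ∀ i, FM (Y i) := fun i x => (hmeas i x).2.1
  have fZ : ∀ i, FM (Z i) := fun i x => (hmeas i x).2.2
  rw [(cmi_int μ (fY (j+k)) (FM.pi fun m : Fin (k+1) => fX (j+m))
    ((FM.pi fun m : Fin k => fY (j+m)).prod (FM.pi fun m : Fin (k+1) => fZ (j+m)))).2]
  have hp : statDist μ X Y Z k = fun a b c => mreal μ (blockEvent X Y Z j (k+1) a b c) := by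
    funext a b c
    simp only [statDist, mreal]
    rw [hstat j]
  rw [hp]
  have m1 : ∀ a β c, margXYkZ (fun a b c => mreal μ (blockEvent X Y Z j (k+1) a b c)) a β c =
      mreal μ {ω | (∀ m : Fin (k+1), X (j+m) ω = a m) ∧ (∀ m : Fin k, Y (j+m) ω = β m) ∧
        (∀ m : Fin (k+1), Z (j+m) ω = c m)} := by
    intro a β c
    rw [← sum_fib μ (fY (j+k))]
    unfold margXYkZ
    refine Finset.sum_congr rfl fun y _ => congrArg _ ?_
    ext ω
    simp only [blockEvent, Set.mem_ofPred_eq, Set.mem_inter_iff, forall_and]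
    rw [Fin.forall_fin_succ' (P := fun i => Y (j+i) ω = _)]
    simp
    tauto
  have m2 : ∀ b c, margYZ (fun a b c => mreal μ (blockEvent X Y Z j (k+1) a b c)) b c =
      mreal μ {ω | (∀ m : Fin (k+1), Y (j+m) ω = b m) ∧
        (∀ m : Fin (k+1), Z (j+m) ω = c m)} := by
    intro b c
    rw [← sum_fib μ (FM.pi fun m : Fin (k+1) => fX (j+m))]
    unfold margYZ
    refine Finset.sum_congr rfl fun y _ => congrArg _ ?_
    ext ω
    simp only [blockEvent, Set.mem_ofPred_eq, Set.mem_inter_iff, forall_and, funext_iff]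
    tauto
  have m3 : ∀ β c, margYkZ (fun a b c => mreal μ (blockEvent X Y Z j (k+1) a b c)) β c =
      mreal μ {ω | (∀ m : Fin k, Y (j+m) ω = β m) ∧
        (∀ m : Fin (k+1), Z (j+m) ω = c m)} := by
    intro β c
    rw [← sum_fib μ (FM.pi fun m : Fin (k+1) => fX (j+m))]
    change ∑ a, margXYkZ (fun a b c => mreal μ (blockEvent X Y Z j (k+1) a b c)) a β c = _
    refine Finset.sum_congr rfl fun y _ => ?_
    rw [m1]
    refine congrArg _ ?_
    ext ω
    simp only [Set.mem_ofPred_eq, Set.mem_inter_iff, funext_iff]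
    tauto
  unfold condMI
  simp only [m1, m2, m3]
  have h := sum_int μ ((FM.pi fun m : Fin (k+1) => fX (j+m)).prod
    ((FM.pi fun m : Fin (k+1) => fY (j+m)).prod (FM.pi fun m : Fin (k+1) => fZ (j+m))))
    (fun s : Blk 𝒳 (k+1) × Blk 𝒳 (k+1) × Blk 𝒳 (k+1) =>
      Real.log ((mreal μ (blockEvent X Y Z j (k+1) s.1 s.2.1 s.2.2) *
        mreal μ {ω | (∀ m : Fin k, Y (j+m) ω = (Fin.init s.2.1 : Fin k → 𝒳) m) ∧
          (∀ m : Fin (k+1), Z (j+m) ω = s.2.2 m)}) /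
        (mreal μ {ω | (∀ m : Fin (k+1), Y (j+m) ω = s.2.1 m) ∧
          (∀ m : Fin (k+1), Z (j+m) ω = s.2.2 m)} *
        mreal μ {ω | (∀ m : Fin (k+1), X (j+m) ω = s.1 m) ∧
          (∀ m : Fin k, Y (j+m) ω = (Fin.init s.2.1 : Fin k → 𝒳) m) ∧
          (∀ m : Fin (k+1), Z (j+m) ω = s.2.2 m)})))
  have h2 := h.2
  simp only [Fintype.sum_prod_type] at h2
  have hb : ∀ a b c, blockEvent X Y Z j (k+1) a b c = {ω | ((fun m : Fin (k+1) => X (j+m) ω),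
      (fun m : Fin (k+1) => Y (j+m) ω), (fun m : Fin (k+1) => Z (j+m) ω)) = (a, b, c)} := by
    intro a b c
    ext ω
    simp [blockEvent, funext_iff, forall_and]
  simp only [← hb] at h2
  rw [h2]
  refine integral_congr_ae (Filter.Eventually.of_forall fun ω => ?_)
  simp only [Prod.mk.injEq, funext_iff, Fin.init, Fin.val_castSucc]
  have e1 : blockEvent X Y Z j (k+1) (fun m => X (j+m) ω) (fun m => Y (j+m) ω)
      (fun m => Z (j+m) ω) = {ω' | Y (j+k) ω' = Y (j+k) ω ∧
        (∀ m : Fin (k+1), X (j+m) ω' = X (j+m) ω) ∧ (∀ m : Fin k, Y (j+m) ω' = Y (j+m) ω) ∧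
        (∀ m : Fin (k+1), Z (j+m) ω' = Z (j+m) ω)} := by
    ext ω'
    simp only [blockEvent, Set.mem_ofPred_eq, forall_and]
    rw [split_last (fun m => Y (j+m) ω' = Y (j+m) ω)]
    tauto
  have e2 : {ω' | (∀ m : Fin (k+1), Y (j+m) ω' = Y (j+m) ω) ∧
        (∀ m : Fin (k+1), Z (j+m) ω' = Z (j+m) ω)} = {ω' | Y (j+k) ω' = Y (j+k) ω ∧
        (∀ m : Fin k, Y (j+m) ω' = Y (j+m) ω) ∧
        (∀ m : Fin (k+1), Z (j+m) ω' = Z (j+m) ω)} := by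
    ext ω'
    simp only [Set.mem_ofPred_eq]
    rw [split_last (fun m => Y (j+m) ω' = Y (j+m) ω)]
    tauto
  rw [e1, e2]

lemma log_arith {a b c d a' b' c' d' q R : ℝ} (ha : 0 < a) (hb : 0 < b) (hc : 0 < c) (hd : 0 < d)
    (ha' : 0 < a') (hb' : 0 < b') (hc' : 0 < c') (hd' : 0 < d')
    (h : a * R = q * b) (h' : a' * R = q * b') (hR : 0 < R) :
    Real.log (a' * c' / (d' * b')) =
      Real.log (a * c / (d * b)) + Real.log (d * c' / (d' * c)) := by
  rw [← Real.log_mul (by positivity) (by positivity)]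
  congr 1
  have : a * b' = a' * b := by
    have : (a * b' - a' * b) * R = 0 := by linear_combination b' * h - b * h'
    have := (mul_eq_zero.mp this).resolve_right hR.ne'
    linarith
  field_simp
  linarith

lemma main_identity (μ : Measure Ω) [IsProbabilityMeasure μ]
    (X Y Z : ℕ → Ω → 𝒳) (k : ℕ) (Q : Hist 𝒳 k → Sym 𝒳 → ℝ)
    (hmeas : MeasProc X Y Z) (hQpos : ∀ h s, 0 < Q h s)
    (hMarkov : MarkovOfOrder μ X Y Z k Q)
    (hstat : Stationary μ X Y Z) (j : ℕ) :
    condMI (statDist μ X Y Z k) =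
      cmiRV μ (fun ω => Y (j+k) ω) (fun ω (m : Fin (j+k+1)) => X m ω)
          (fun ω => ((fun m : Fin (j+k) => Y m ω), (fun m : Fin (j+k+1) => Z m ω))) +
      cmiRV μ (fun ω => Y (j+k) ω)
        (fun ω => ((fun m : Fin j => Y m ω), (fun m : Fin j => Z m ω)))
        (fun ω => ((fun m : Fin k => Y (j + m) ω), (fun m : Fin (k+1) => Z (j + m) ω))) := by
  have fX : ∀ i, FM (X i) := fun i x => (hmeas i x).1
  have fY : ∀ i, FM (Y i) := fun i x => (hmeas i x).2.1
  have fZ : ∀ i, FM (Z i) := fun i x => (hmeas i x).2.2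
  rw [condMI_int μ X Y Z k j hmeas hstat]
  have i1 := cmi_int μ (fY (j+k)) (FM.pi fun m : Fin (k+1) => fX (j+m))
    ((FM.pi fun m : Fin k => fY (j+m)).prod (FM.pi fun m : Fin (k+1) => fZ (j+m)))
  have i2 := cmi_int μ (fY (j+k)) (FM.pi fun m : Fin (j+k+1) => fX m)
    ((FM.pi fun m : Fin (j+k) => fY m).prod (FM.pi fun m : Fin (j+k+1) => fZ m))
  have i3 := cmi_int μ (fY (j+k)) ((FM.pi fun m : Fin j => fY m).prod (FM.pi fun m : Fin j => fZ m))
    ((FM.pi fun m : Fin k => fY (j+m)).prod (FM.pi fun m : Fin (k+1) => fZ (j+m)))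
  rw [i1.2, i2.2, i3.2, ← integral_add i2.1 i3.1]
  refine integral_congr_ae ?_
  filter_upwards [ae_pos μ (fun ω => ((fun m : Fin (j+k+1) => X m ω),
    (fun m : Fin (j+k+1) => Y m ω), (fun m : Fin (j+k+1) => Z m ω)))] with ω hω
  simp only [Prod.mk.injEq, funext_iff] at hω ⊢
  -- the events of the last term
  have ed : {ω' | Y (j+k) ω' = Y (j+k) ω ∧ ((∀ m : Fin j, Y m ω' = Y m ω) ∧
        ∀ m : Fin j, Z m ω' = Z m ω) ∧ (∀ m : Fin k, Y (j+m) ω' = Y (j+m) ω) ∧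
        ∀ m : Fin (k+1), Z (j+m) ω' = Z (j+m) ω} =
      {ω' | Y (j+k) ω' = Y (j+k) ω ∧ (∀ m : Fin (j+k), Y m ω' = Y m ω) ∧
        ∀ m : Fin (j+k+1), Z m ω' = Z m ω} := by
    ext ω'
    simp only [Set.mem_ofPred_eq]
    rw [split_add (fun m => Y m ω' = Y m ω) j k, split_add_succ (fun m => Z m ω' = Z m ω) j k]
    tauto
  have ec : {ω' | ((∀ m : Fin j, Y m ω' = Y m ω) ∧
        ∀ m : Fin j, Z m ω' = Z m ω) ∧ (∀ m : Fin k, Y (j+m) ω' = Y (j+m) ω) ∧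
        ∀ m : Fin (k+1), Z (j+m) ω' = Z (j+m) ω} =
      {ω' | (∀ m : Fin (j+k), Y m ω' = Y m ω) ∧
        ∀ m : Fin (j+k+1), Z m ω' = Z m ω} := by
    ext ω'
    simp only [Set.mem_ofPred_eq]
    rw [split_add (fun m => Y m ω' = Y m ω) j k, split_add_succ (fun m => Z m ω' = Z m ω) j k]
    tauto
  rw [ed, ec]
  -- Markov
  set a : Blk 𝒳 k := fun m => X (j+m) ω with ha
  set b : Blk 𝒳 k := fun m => Y (j+m) ω with hb
  set c : Blk 𝒳 k := fun m => Z (j+m) ω with hc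
  have sumY : ∀ E : Set Ω, mreal μ (E ∩ {ω' | X (j+k) ω' = X (j+k) ω ∧ Z (j+k) ω' = Z (j+k) ω}) =
      ∑ y, mreal μ (E ∩ {ω' | X (j+k) ω' = X (j+k) ω ∧ Y (j+k) ω' = y ∧
        Z (j+k) ω' = Z (j+k) ω}) := by
    intro E
    rw [← sum_fib μ (fY (j+k))]
    refine Finset.sum_congr rfl fun y _ => congrArg _ ?_
    ext ω'
    simp only [Set.mem_ofPred_eq, Set.mem_inter_iff]
    tauto
  have gen : ∀ E : Set Ω, (∀ s : Sym 𝒳, mreal μ (E ∩ {ω' | X (j + k) ω' = s.1 ∧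
      Y (j + k) ω' = s.2.1 ∧ Z (j + k) ω' = s.2.2}) = Q (a, b, c) s * mreal μ E) →
      mreal μ (E ∩ {ω' | X (j+k) ω' = X (j+k) ω ∧ Y (j+k) ω' = Y (j+k) ω ∧
        Z (j+k) ω' = Z (j+k) ω}) * (∑ y, Q (a, b, c) (X (j+k) ω, y, Z (j+k) ω)) =
      Q (a, b, c) (X (j+k) ω, Y (j+k) ω, Z (j+k) ω) *
        mreal μ (E ∩ {ω' | X (j+k) ω' = X (j+k) ω ∧ Z (j+k) ω' = Z (j+k) ω}) := by
    intro E hE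
    rw [sumY E, hE (X (j+k) ω, Y (j+k) ω, Z (j+k) ω)]
    rw [Finset.sum_congr rfl fun y _ => hE (X (j+k) ω, y, Z (j+k) ω), ← Finset.sum_mul]
    ring
  have gl := gen (blockEvent X Y Z 0 j (fun m => X m ω) (fun m => Y m ω) (fun m => Z m ω) ∩
    blockEvent X Y Z j k a b c) (fun s => hMarkov j _ _ _ a b c s)
  have gs := gen (blockEvent X Y Z j k a b c) (by
    intro s
    have fP := (FM.pi fun m : Fin j => fX m).prod
      ((FM.pi fun m : Fin j => fY m).prod (FM.pi fun m : Fin j => fZ m))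
    rw [← sum_fib μ fP (blockEvent X Y Z j k a b c), ← sum_fib μ fP, Finset.mul_sum]
    refine Finset.sum_congr rfl fun p _ => ?_
    have e := hMarkov j p.1 p.2.1 p.2.2 a b c s
    have e0 : {ω' | ((fun m : Fin j => X m ω'), (fun m : Fin j => Y m ω'),
        (fun m : Fin j => Z m ω')) = p} = blockEvent X Y Z 0 j p.1 p.2.1 p.2.2 := by
      ext ω'
      simp [blockEvent, Prod.ext_iff, funext_iff, forall_and]
    rw [e0, Set.inter_comm (blockEvent X Y Z j k a b c) (blockEvent X Y Z 0 j _ _ _), ← e]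
    congr 1
    ext ω'
    simp only [Set.mem_inter_iff]
    tauto)
  have el1 : blockEvent X Y Z 0 j (fun m => X m ω) (fun m => Y m ω) (fun m => Z m ω) ∩
      blockEvent X Y Z j k a b c ∩ {ω' | X (j+k) ω' = X (j+k) ω ∧ Y (j+k) ω' = Y (j+k) ω ∧
        Z (j+k) ω' = Z (j+k) ω} = {ω' | Y (j+k) ω' = Y (j+k) ω ∧
        (∀ m : Fin (j+k+1), X m ω' = X m ω) ∧ (∀ m : Fin (j+k), Y m ω' = Y m ω) ∧
        ∀ m : Fin (j+k+1), Z m ω' = Z m ω} := by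
    ext ω'
    simp only [Set.mem_inter_iff, Set.mem_ofPred_eq, blockEvent, forall_and, zero_add, ha, hb, hc]
    rw [split_last (fun m => X m ω' = X m ω), split_last (fun m => Z m ω' = Z m ω),
      split_add (fun m => X m ω' = X m ω), split_add (fun m => Y m ω' = Y m ω),
      split_add (fun m => Z m ω' = Z m ω)]
    tauto
  have el2 : blockEvent X Y Z 0 j (fun m => X m ω) (fun m => Y m ω) (fun m => Z m ω) ∩
      blockEvent X Y Z j k a b c ∩ {ω' | X (j+k) ω' = X (j+k) ω ∧
        Z (j+k) ω' = Z (j+k) ω} = {ω' | 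
        (∀ m : Fin (j+k+1), X m ω' = X m ω) ∧ (∀ m : Fin (j+k), Y m ω' = Y m ω) ∧
        ∀ m : Fin (j+k+1), Z m ω' = Z m ω} := by
    ext ω'
    simp only [Set.mem_inter_iff, Set.mem_ofPred_eq, blockEvent, forall_and, zero_add, ha, hb, hc]
    rw [split_last (fun m => X m ω' = X m ω), split_last (fun m => Z m ω' = Z m ω),
      split_add (fun m => X m ω' = X m ω), split_add (fun m => Y m ω' = Y m ω),
      split_add (fun m => Z m ω' = Z m ω)]
    tauto
  have es1 : blockEvent X Y Z j k a b c ∩ {ω' | X (j+k) ω' = X (j+k) ω ∧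
        Y (j+k) ω' = Y (j+k) ω ∧ Z (j+k) ω' = Z (j+k) ω} = {ω' | Y (j+k) ω' = Y (j+k) ω ∧
        (∀ m : Fin (k+1), X (j+m) ω' = X (j+m) ω) ∧ (∀ m : Fin k, Y (j+m) ω' = Y (j+m) ω) ∧
        ∀ m : Fin (k+1), Z (j+m) ω' = Z (j+m) ω} := by
    ext ω'
    simp only [Set.mem_inter_iff, Set.mem_ofPred_eq, blockEvent, forall_and, ha, hb, hc]
    rw [split_last (fun m => X (j+m) ω' = X (j+m) ω), split_last (fun m => Z (j+m) ω' = Z (j+m) ω)]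
    tauto
  have es2 : blockEvent X Y Z j k a b c ∩ {ω' | X (j+k) ω' = X (j+k) ω ∧
        Z (j+k) ω' = Z (j+k) ω} = {ω' | 
        (∀ m : Fin (k+1), X (j+m) ω' = X (j+m) ω) ∧ (∀ m : Fin k, Y (j+m) ω' = Y (j+m) ω) ∧
        ∀ m : Fin (k+1), Z (j+m) ω' = Z (j+m) ω} := by
    ext ω'
    simp only [Set.mem_inter_iff, Set.mem_ofPred_eq, blockEvent, forall_and, ha, hb, hc]
    rw [split_last (fun m => X (j+m) ω' = X (j+m) ω), split_last (fun m => Z (j+m) ω' = Z (j+m) ω)]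
    tauto
  rw [el1, el2] at gl
  rw [es1, es2] at gs
  have pos : ∀ E : Set Ω, (∀ ω', (∀ n, n < j + k + 1 → X n ω' = X n ω) →
      (∀ n, n < j + k + 1 → Y n ω' = Y n ω) → (∀ n, n < j + k + 1 → Z n ω' = Z n ω) → ω' ∈ E) →
      0 < mreal μ E := by
    intro E hE
    refine hω.trans_le (mreal_mono μ fun ω' h => hE ω' ?_ ?_ ?_)
    · exact fun n hn => h.1 ⟨n, hn⟩
    · exact fun n hn => h.2.1 ⟨n, hn⟩
    · exact fun n hn => h.2.2 ⟨n, hn⟩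
  refine log_arith ?_ ?_ ?_ ?_ ?_ ?_ ?_ ?_ gl gs ?_
  · exact pos _ fun ω' hx hy hz => ⟨hy _ (by omega), fun m => hx _ (by omega),
      fun m => hy _ (by omega), fun m => hz _ (by omega)⟩
  · exact pos _ fun ω' hx hy hz => ⟨fun m => hx _ (by omega),
      fun m => hy _ (by omega), fun m => hz _ (by omega)⟩
  · exact pos _ fun ω' hx hy hz => ⟨fun m => hy _ (by omega), fun m => hz _ (by omega)⟩
  · exact pos _ fun ω' hx hy hz => ⟨hy _ (by omega),
      fun m => hy _ (by omega), fun m => hz _ (by omega)⟩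
  · exact pos _ fun ω' hx hy hz => ⟨hy _ (by omega), fun m => hx _ (by omega),
      fun m => hy _ (by omega), fun m => hz _ (by omega)⟩
  · exact pos _ fun ω' hx hy hz => ⟨fun m => hx _ (by omega),
      fun m => hy _ (by omega), fun m => hz _ (by omega)⟩
  · exact pos _ fun ω' hx hy hz => ⟨fun m => hy _ (by omega), fun m => hz _ (by omega)⟩
  · exact pos _ fun ω' hx hy hz => ⟨hy _ (by omega),
      fun m => hy _ (by omega), fun m => hz _ (by omega)⟩
  · exact Finset.sum_pos (fun y _ => hQpos _ _) Finset.univ_nonempty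

end helpers

/-- Under Assumptions 1–3 the directed information rate
`lim (1/n) Σ_{i=1}^n I(Y_i; X₁ⁱ | Y₁^{i−1}, Z₁ⁱ)` exists and equals
`I(Ȳ_{k+1}; X̄₁ᵏ⁺¹ | Ȳ₁ᵏ, Z̄₁ᵏ⁺¹)`; under Assumptions 1–2 alone every term with `i > k`
is bounded above by this quantity. -/
theorem directed_info_rate
    {𝒳 : Type*} [Fintype 𝒳] [DecidableEq 𝒳] [Nonempty 𝒳]
    {Ω : Type*} [MeasurableSpace Ω]
    (μ : MeasureTheory.Measure Ω) [MeasureTheory.IsProbabilityMeasure μ]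
    (X Y Z : ℕ → Ω → 𝒳) (k : ℕ) (Q : Hist 𝒳 k → Sym 𝒳 → ℝ)
    (hmeas : MeasProc X Y Z)
    (hQ : IsTransMat Q) (hQpos : ∀ h s, 0 < Q h s)
    (hMarkov : MarkovOfOrder μ X Y Z k Q)
    (hstat : Stationary μ X Y Z) :
    (∀ i : ℕ, k ≤ i →
      cmiRV μ (fun ω => Y i ω) (fun ω (j : Fin (i+1)) => X j ω)
          (fun ω => ((fun j : Fin i => Y j ω), (fun j : Fin (i+1) => Z j ω)))
        ≤ condMI (statDist μ X Y Z k)) ∧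
    (CondIndepPast μ X Y Z k →
      Tendsto (fun n : ℕ => (n : ℝ)⁻¹ * ∑ i ∈ Finset.range n,
          cmiRV μ (fun ω => Y i ω) (fun ω (j : Fin (i+1)) => X j ω)
            (fun ω => ((fun j : Fin i => Y j ω), (fun j : Fin (i+1) => Z j ω))))
        atTop (𝓝 (condMI (statDist μ X Y Z k)))) := by
  have fY : ∀ i, FM (Y i) := fun i x => (hmeas i x).2.1
  have fZ : ∀ i, FM (Z i) := fun i x => (hmeas i x).2.2
  refine ⟨?_, ?_⟩
  · intro i hi
    obtain ⟨j, rfl⟩ := Nat.exists_eq_add_of_le' hi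
    rw [main_identity μ X Y Z k Q hmeas hQpos hMarkov hstat j]
    exact le_add_of_nonneg_right (cmi_nonneg μ (fY (j+k))
      ((FM.pi fun m : Fin j => fY m).prod (FM.pi fun m : Fin j => fZ m)))
  · intro hci
    refine Filter.Tendsto.cesaro ?_
    refine tendsto_const_nhds.congr' ?_
    filter_upwards [eventually_ge_atTop k] with i hi
    obtain ⟨j, rfl⟩ := Nat.exists_eq_add_of_le' hi
    rw [main_identity μ X Y Z k Q hmeas hQpos hMarkov hstat j]
    refine (add_eq_left.mpr (cmi_zero μ ?_))
    rintro y ⟨py, pz⟩ ⟨b, c⟩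
    have h := hci j py pz b c y
    simp only [Prod.mk.injEq, funext_iff]
    convert h using 3
    all_goals
      ext ω
      simp only [Set.mem_ofPred_eq, Set.mem_inter_iff, forall_and]
      try tauto

end DIG
end
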